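/- arXiv:1701.00269 — 3 statements merged into one kernel-verified Lean document; each statement's English description precedes it below -/
import Mathlib

section
/- For every even integer k ≥ 4 there exists a constant c = c(k) > 0 such that for all positive integers n, the number of C_k-free 3-uniform hypergraphs with vertex set [n] is at most 2^{c·n²}. -/
/-! The number of `C_k`-free triple systems on a vertex set `V` with `n` elements is bounded by a
recursion on the number `m` of edges, which rests on one structural fact: for even `k ≥ 4`, a
`C_k`-free triple system `H` with `m ≥ 1` edges has a pair of vertices whose codegree is at least
`c (m / n²)^s n`, where `s = k²` and `c > 0` depends only on `k` (`exists_rich_pair`).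

*The rich pair.* If every pair of vertices lying in an edge had codegree at least `2k`, a cycle of
length `k` in the shadow could be built greedily inside the link of a vertex and then expanded to a
loose cycle by Hall's theorem (`hasLooseCycle_of_full`). So some pair has small codegree; deleting
its edges and iterating gives `m ≤ 2k |∂H|`, where `∂H` is the set of ordered pairs in the shadow
(`card_le_shadow`). Jensen's inequality, applied twice, shows that `∂H` contains at least
`(|∂H| / n²)^(k²) n^(2k)` homomorphic copies of the complete bipartite graph `K_{k,k}`
(`homs_lower`). Since `k` is even, each copy contains a closed walk of length `k` alternating
between the two sides. Extend every edge of the walk to an edge of `H` by a chosen third vertex.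
If `H` is `C_k`-free, then two of the `2k` vertices obtained coincide, and for each such coincidence
one coordinate of the copy is confined, once the others are fixed, to a set whose size is at most
the maximum codegree `Δ`. Hence there are at most `3 k² n^(2k-1) Δ` copies (`homs_upper`), and the
comparison of the two bounds gives the lower bound on `Δ`.

*The recursion.* Let `N m` be the number of `C_k`-free systems with `m` edges and let
`d = ⌈c (m / n²)^s n⌉`. Deleting `d` edges through a rich pair gives
`N m ≤ n² (n choose d) N (m - d)` (`card_freeFamily_step`). With `u = n / √m` the factor
`n² (n choose d)` is at most `exp (O(d u))`, as `n / d` is polynomial in `u`, whereas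
`n √m - n √(m - d) ≥ d u / 2`. Thus `N m ≤ exp (K n √m)` for a suitable `K = K(k)`
(`step_estimate`, `card_freeFamily_le`). As `m ≤ 2k n²`, summing over `m` finishes the proof.
-/

/-- A hypergraph `H` (a finite collection of finite edge sets) contains a loose `k`-cycle:
distinct edges `e 0, …, e (k-1)` and distinct vertices `v 0, …, v (k-1)` such that
consecutive edges (cyclically) intersect exactly in the corresponding vertex and all
other pairs of edges are disjoint. -/
def HasLooseCycle (k : ℕ) (H : Finset (Finset ℕ)) : Prop :=
  ∃ (e : ZMod k → Finset ℕ) (v : ZMod k → ℕ),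
    Function.Injective e ∧ Function.Injective v ∧
    (∀ i, e i ∈ H) ∧
    (∀ i, e i ∩ e (i + 1) = ({v i} : Finset ℕ)) ∧
    (∀ i j, j ≠ i → j ≠ i + 1 → i ≠ j + 1 → e i ∩ e j = ∅)

section CkFree

open Finset

/-! ### Loose cycles and the shadow -/

theorem HasLooseCycle.mono {k : ℕ} {H H' : Finset (Finset ℕ)} (h : H' ⊆ H)
    (hc : HasLooseCycle k H') : HasLooseCycle k H := by
  obtain ⟨e, v, h1, h2, h3, h4, h5⟩ := hc
  exact ⟨e, v, h1, h2, fun i => h (h3 i), h4, h5⟩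

theorem zmod_natCast_ne_zero {k : ℕ} (a : ℕ) (h0 : 0 < a) (h : a < k) : (a : ZMod k) ≠ 0 := by
  rw [Ne, ZMod.natCast_eq_zero_iff]
  exact fun hd => absurd (Nat.le_of_dvd h0 hd) (by omega)

/-- The expansion of a cycle is a loose cycle: the vertices `u i` form the cycle and `w i` is the
extra vertex of the edge on `u i` and `u (i + 1)`. -/
theorem hasLooseCycle_of_expansion {k : ℕ} (hk : 4 ≤ k) {H : Finset (Finset ℕ)}
    (u w : ZMod k → ℕ) (hu : Function.Injective u) (hw : Function.Injective w)
    (huw : ∀ i j, w i ≠ u j) (hH : ∀ i, ({u i, u (i + 1), w i} : Finset ℕ) ∈ H) :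
    HasLooseCycle k H := by
  have h1 : (1 : ZMod k) ≠ 0 := by exact_mod_cast zmod_natCast_ne_zero (k := k) 1 (by omega) (by omega)
  have h2 : (2 : ZMod k) ≠ 0 := by exact_mod_cast zmod_natCast_ne_zero (k := k) 2 (by omega) (by omega)
  refine ⟨fun i => {u i, u (i + 1), w i}, fun i => u (i + 1), ?_, ?_, hH, ?_, ?_⟩
  · intro i j hij
    have : w i ∈ ({u j, u (j + 1), w j} : Finset ℕ) := by
      simp only at hij
      rw [← hij]; simp
    simp only [mem_insert, mem_singleton, huw, false_or] at this
    exact hw this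
  · intro i j hij
    exact add_right_cancel (hu hij)
  · intro i
    ext x
    simp only [mem_inter, mem_insert, mem_singleton]
    constructor
    · rintro ⟨rfl | rfl | rfl, h | h | h⟩
      · exact absurd (hu h) (by simpa using h1)
      · exact absurd (hu h) (by rw [add_assoc, one_add_one_eq_two]; simpa using h2)
      · exact absurd h.symm (huw _ _)
      · rfl
      · rfl
      · rfl
      · exact absurd h (huw _ _)
      · exact absurd h (huw _ _)
      · exact absurd (hw h) (by simpa using h1)
    · rintro rfl
      simp
  · intro i j hji hji1 hij1
    ext x
    simp only [mem_inter, mem_insert, mem_singleton, notMem_empty, iff_false]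
    rintro ⟨rfl | rfl | rfl, h | h | h⟩
    · exact hji (hu h).symm
    · exact hij1 (hu h)
    · exact absurd h.symm (huw _ _)
    · exact hji1 (hu h).symm
    · exact hji (add_right_cancel (hu h)).symm
    · exact absurd h.symm (huw _ _)
    · exact absurd h (huw _ _)
    · exact absurd h (huw _ _)
    · exact hji (hw h).symm

/-- The vertices of `V` completing the pair `a`, `b` to an edge of `H`; their number is the
codegree of the pair. If `H` is 3-uniform, this is empty for `a = b`. -/
def coNbrs (V : Finset ℕ) (H : Finset (Finset ℕ)) (a b : ℕ) : Finset ℕ :=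
  V.filter fun z => ({a, b, z} : Finset ℕ) ∈ H

/-- The shadow of `H`, encoded as a symmetric set of ordered pairs. -/
def shadowPairs (V : Finset ℕ) (H : Finset (Finset ℕ)) : Finset (ℕ × ℕ) :=
  (V ×ˢ V).filter fun p => (coNbrs V H p.1 p.2).Nonempty

variable {V : Finset ℕ} {H : Finset (Finset ℕ)}

theorem edge_props (hH : H ⊆ V.powersetCard 3) {a b c : ℕ} (h : ({a, b, c} : Finset ℕ) ∈ H) :
    a ≠ b ∧ a ≠ c ∧ b ≠ c ∧ a ∈ V ∧ b ∈ V ∧ c ∈ V := by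
  have h := mem_powersetCard.1 (hH h)
  have hs := h.1
  have hc := h.2
  refine ⟨?_, ?_, ?_, hs (by simp), hs (by simp), hs (by simp)⟩ <;> rintro rfl
  · have := card_le_two (a := a) (b := c); simp at hc; omega
  · have := card_le_two (a := a) (b := b)
    rw [show ({a, b, a} : Finset ℕ) = {a, b} by ext; simp; tauto] at hc; omega
  · have := card_le_two (a := a) (b := b); simp at hc; omega

theorem mem_coNbrs (hH : H ⊆ V.powersetCard 3) {a b c : ℕ} :
    c ∈ coNbrs V H a b ↔ ({a, b, c} : Finset ℕ) ∈ H := by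
  simp only [coNbrs, mem_filter, and_iff_right_iff_imp]
  exact fun h => (edge_props hH h).2.2.2.2.2

theorem mem_shadowPairs (hH : H ⊆ V.powersetCard 3) {a b : ℕ} :
    (a, b) ∈ shadowPairs V H ↔ ∃ c, ({a, b, c} : Finset ℕ) ∈ H := by
  rw [shadowPairs, mem_filter, mem_product]
  simp only [Finset.Nonempty, mem_coNbrs hH, and_iff_right_iff_imp]
  rintro ⟨c, h⟩
  have := edge_props hH h
  tauto

theorem shadowPairs_symm (hH : H ⊆ V.powersetCard 3) {a b : ℕ} (h : (a, b) ∈ shadowPairs V H) :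
    (b, a) ∈ shadowPairs V H := by
  rw [mem_shadowPairs hH] at h ⊢
  obtain ⟨c, h⟩ := h
  exact ⟨c, by rwa [insert_comm]⟩

/-- Greedy construction of a path `f 1, …, f (r + 1)` in the link of the vertex `f 0`. -/
theorem exists_link_path (hH : H ⊆ V.powersetCard 3) {k : ℕ}
    (hne : H.Nonempty) (hfull : ∀ a b, (a, b) ∈ shadowPairs V H → 2 * k ≤ #(coNbrs V H a b))
    (r : ℕ) (hr : r + 2 ≤ k) :
    ∃ f : ℕ → ℕ, Set.InjOn f (Set.Iic (r + 1)) ∧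
      (∀ i, 1 ≤ i → i ≤ r → ({f 0, f i, f (i + 1)} : Finset ℕ) ∈ H) ∧
      (f 0, f 1) ∈ shadowPairs V H ∧ (f 0, f (r + 1)) ∈ shadowPairs V H := by
  induction r with
  | zero =>
    obtain ⟨e, he⟩ := hne
    obtain ⟨a, b, c, hab, hac, hbc, rfl⟩ := card_eq_three.1 (mem_powersetCard.1 (hH he)).2
    refine ⟨fun i => if i = 0 then a else b, ?_, ?_, ?_, ?_⟩
    · intro i hi j hj hij
      simp only [Set.mem_Iic] at hi hj
      interval_cases i <;> interval_cases j <;> simp_all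
    · intro i h1 h2; omega
    · exact (mem_shadowPairs hH).2 ⟨c, by simpa using he⟩
    · exact (mem_shadowPairs hH).2 ⟨c, by simpa using he⟩
  | succ r ih =>
    obtain ⟨f, hinj, hedge, h01, hlast⟩ := ih (by omega)
    have hcard : #((range (r + 2)).image f) < #(coNbrs V H (f 0) (f (r + 1))) := by
      have h1 : #((range (r + 2)).image f) ≤ r + 2 := by
        simpa using card_image_le (s := range (r + 2)) (f := f)
      have := hfull _ _ hlast
      omega
    obtain ⟨z, hz, hzn⟩ := exists_mem_notMem_of_card_lt_card hcard
    have hz' := (mem_coNbrs hH).1 hz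
    have hzn' : ∀ i, i ≤ r + 1 → f i ≠ z := fun i hi h =>
      hzn (mem_image.2 ⟨i, by simp; omega, h⟩)
    refine ⟨fun i => if i = r + 2 then z else f i, ?_, ?_, ?_, ?_⟩
    · intro i hi j hj hij
      simp only [Set.mem_Iic] at hi hj
      simp only at hij
      split_ifs at hij with h1 h2 h2
      · omega
      · exact absurd hij.symm (hzn' j (by omega))
      · exact absurd hij (hzn' i (by omega))
      · exact hinj (by simp; omega) (by simp; omega) hij
    · intro i h1 h2
      rcases Nat.lt_or_ge i (r + 1) with h | h
      · simpa [show i ≠ r + 2 by omega, show i ≠ r + 1 by omega] using hedge i h1 (by omega)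
      · obtain rfl : i = r + 1 := by omega
        simpa using hz'
    · simpa using h01
    · refine (mem_shadowPairs hH).2 ⟨f (r + 1), ?_⟩
      simp only [show r + 1 + 1 = r + 2 from rfl, if_true, show (0 : ℕ) ≠ r + 2 by omega, if_false]
      rwa [pair_comm]

/-- A nonempty triple system in which every shadow pair has codegree at least `2k` contains a loose
`k`-cycle: a link path closes up to a cycle of the shadow, and Hall's theorem provides distinct
extra vertices outside that cycle. -/
theorem hasLooseCycle_of_full (hH : H ⊆ V.powersetCard 3) {k : ℕ} (hk : 4 ≤ k)
    (hne : H.Nonempty)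
    (hfull : ∀ a b, (a, b) ∈ shadowPairs V H → 2 * k ≤ #(coNbrs V H a b)) :
    HasLooseCycle k H := by
  obtain ⟨f, hinj, hedge, h01, hlast⟩ := exists_link_path hH hne hfull (k - 2) (by omega)
  have : NeZero k := ⟨by omega⟩
  have hlt : ∀ i : ZMod k, i.val < k := ZMod.val_lt
  set u : ZMod k → ℕ := fun i => f i.val with hu
  have huinj : Function.Injective u := by
    intro i j hij
    have := hlt i
    have := hlt j
    exact ZMod.val_injective k (hinj (by simp; omega) (by simp; omega) hij)
  have hsh : ∀ i, (u i, u (i + 1)) ∈ shadowPairs V H := by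
    intro i
    have hi := hlt i
    rcases Nat.lt_or_ge (i.val + 1) k with h | h
    · have hval : (i + 1).val = i.val + 1 := by
        have h' : i + 1 = ((i.val + 1 : ℕ) : ZMod k) := by simp
        rw [h', ZMod.val_natCast_of_lt h]
      simp only [hu, hval]
      rcases Nat.eq_zero_or_pos i.val with h0 | h0
      · rw [h0]; exact h01
      · refine (mem_shadowPairs hH).2 ⟨f 0, ?_⟩
        have := hedge i.val h0 (by omega)
        rwa [insert_comm, pair_comm] at this
    · have h1 : i.val = k - 2 + 1 := by omega
      have h2 : i + 1 = 0 := by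
        have : ((i.val + 1 : ℕ) : ZMod k) = 0 := by
          rw [show i.val + 1 = k by omega]; simp
        simpa using this
      simp only [hu, h2, h1, ZMod.val_zero]
      exact shadowPairs_symm hH hlast
  obtain ⟨w, hwinj, hw⟩ := (Finset.all_card_le_biUnion_card_iff_exists_injective
    (fun i => coNbrs V H (u i) (u (i + 1)) \ univ.image u)).1 (by
      intro s
      rcases s.eq_empty_or_nonempty with rfl | ⟨i, hi⟩
      · simp
      · have h1 : #s ≤ k := by simpa [ZMod.card] using card_le_univ s
        have h2 : #(univ.image u) ≤ k := by
          simpa [ZMod.card] using card_image_le (s := (univ : Finset (ZMod k))) (f := u)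
        have h3 := le_card_sdiff (univ.image u) (coNbrs V H (u i) (u (i + 1)))
        have h4 := hfull _ _ (hsh i)
        have h5 := card_le_card (subset_biUnion_of_mem
          (fun i => coNbrs V H (u i) (u (i + 1)) \ univ.image u) hi)
        omega)
  refine hasLooseCycle_of_expansion hk u w huinj hwinj ?_ ?_
  · intro i j h
    have := (mem_sdiff.1 (hw i)).2
    exact this (mem_image.2 ⟨j, mem_univ _, h.symm⟩)
  · intro i
    exact (mem_coNbrs hH).1 (mem_sdiff.1 (hw i)).1

/-- A `C_k`-free triple system has at most `2k` times as many edges as (ordered) shadow pairs, by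
repeated deletion of all edges through a pair of codegree less than `2k`. -/
theorem card_le_shadow {k : ℕ} (hk : 4 ≤ k) (V : Finset ℕ) (m : ℕ) :
    ∀ H : Finset (Finset ℕ), #H = m → H ⊆ V.powersetCard 3 → ¬ HasLooseCycle k H →
      m ≤ 2 * k * #(shadowPairs V H) := by
  induction m using Nat.strong_induction_on with
  | _ m ih =>
  intro H hm hH hfree
  rcases H.eq_empty_or_nonempty with rfl | hne
  · simp at hm; omega
  by_cases hfull : ∀ a b, (a, b) ∈ shadowPairs V H → 2 * k ≤ #(coNbrs V H a b)
  · exact absurd (hasLooseCycle_of_full hH hk hne hfull) hfree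
  push Not at hfull
  obtain ⟨a, b, hab, hlt⟩ := hfull
  obtain ⟨c, hc⟩ := (mem_shadowPairs hH).1 hab
  have hne_ab := (edge_props hH hc).1
  set H' := H.filter fun e => ¬ (a ∈ e ∧ b ∈ e) with hH'
  have hsub : H' ⊆ H := filter_subset _ _
  have hrem : #(H.filter fun e => a ∈ e ∧ b ∈ e) ≤ #(coNbrs V H a b) := by
    refine (card_le_card (t := (coNbrs V H a b).image fun z => {a, b, z}) ?_).trans card_image_le
    intro e he
    obtain ⟨heH, ha, hb⟩ := mem_filter.1 he
    have h3 := (mem_powersetCard.1 (hH heH)).2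
    have h2 : #((e.erase a).erase b) = 1 := by
      rw [card_erase_of_mem (mem_erase.2 ⟨hne_ab.symm, hb⟩), card_erase_of_mem ha, h3]
    obtain ⟨z, hz⟩ := card_eq_one.1 h2
    have hez : ({a, b, z} : Finset ℕ) = e := by
      rw [← hz, insert_erase (mem_erase.2 ⟨hne_ab.symm, hb⟩), insert_erase ha]
    exact mem_image.2 ⟨z, (mem_coNbrs hH).2 (hez ▸ heH), hez⟩
  have hsplit := card_filter_add_card_filter_not (s := H) (fun e => a ∈ e ∧ b ∈ e)
  have hpos : 0 < #(H.filter fun e => a ∈ e ∧ b ∈ e) :=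
    card_pos.2 ⟨_, mem_filter.2 ⟨hc, by simp, by simp⟩⟩
  have hrec := ih #H' (by rw [hH']; omega) H' rfl (hsub.trans hH) fun h => hfree (h.mono hsub)
  have hsh : shadowPairs V H' ⊆ (shadowPairs V H).erase (a, b) := by
    rintro ⟨x, y⟩ hxy
    obtain ⟨z, hz⟩ := (mem_shadowPairs (hsub.trans hH)).1 hxy
    refine mem_erase.2 ⟨?_, (mem_shadowPairs hH).2 ⟨z, hsub hz⟩⟩
    rintro h
    obtain ⟨rfl, rfl⟩ := Prod.mk.inj h
    exact (mem_filter.1 hz).2 (by simp)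
  have h1 := card_le_card hsh
  rw [card_erase_of_mem hab] at h1
  have h2 : 0 < #(shadowPairs V H) := card_pos.2 ⟨_, hab⟩
  calc m = _ := hm.symm
    _ = _ := hsplit.symm
    _ ≤ 2 * k + 2 * k * #(shadowPairs V H') := by rw [← hH']; omega
    _ ≤ 2 * k + 2 * k * (#(shadowPairs V H) - 1) := by gcongr
    _ = 2 * k * #(shadowPairs V H) := by
      obtain ⟨t, ht⟩ := Nat.exists_eq_add_of_lt h2
      rw [ht]; simp; ring

/-! ### Counting copies of a complete bipartite graph -/

/-- If the coordinate `z t` of every `z ∈ B` lies in a set `S z` of size at most `Δ` that does not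
depend on that coordinate, then `B` has at most `Δ |V|^(|ι| - 1)` elements (stated without
subtraction). -/
theorem card_mul_le_of_coord {ι : Type*} [Fintype ι] [DecidableEq ι] {V : Finset ℕ}
    (B : Finset (ι → ℕ)) (hB : B ⊆ Fintype.piFinset fun _ => V) (t : ι)
    (S : (ι → ℕ) → Finset ℕ) (hS : ∀ z a, S (Function.update z t a) = S z) (Δ : ℕ)
    (hΔ : ∀ z, #(S z) ≤ Δ) (hBS : ∀ z ∈ B, z t ∈ S z) :
    #B * #V ≤ #V ^ Fintype.card ι * Δ := by
  rw [← card_product]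
  calc #(B ×ˢ V) ≤ #((Fintype.piFinset fun _ : ι => V).sigma fun z => S z) := by
        refine card_le_card_of_injOn (fun p => ⟨Function.update p.1 t p.2, p.1 t⟩) ?_ ?_
        · rintro ⟨z, a⟩ hp
          obtain ⟨hz, ha⟩ := mem_product.1 (mem_coe.1 hp)
          have hzV := Fintype.mem_piFinset.1 (hB hz)
          refine mem_coe.2 (mem_sigma.2 ⟨Fintype.mem_piFinset.2 fun i => ?_, ?_⟩)
          · rcases eq_or_ne i t with rfl | h
            · simpa using ha
            · simpa [h] using hzV i
          · simpa [hS] using hBS z hz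
        · rintro ⟨z, a⟩ - ⟨z', a'⟩ - h
          simp only [Sigma.mk.injEq, heq_eq_eq] at h
          obtain ⟨h1, h2⟩ := h
          have ha : a = a' := by simpa using congrFun h1 t
          have hz : z = z' := by
            funext i
            rcases eq_or_ne i t with rfl | h
            · exact h2
            · simpa [h] using congrFun h1 i
          rw [ha, hz]
    _ = ∑ z ∈ Fintype.piFinset fun _ : ι => V, #(S z) := card_sigma _ _
    _ ≤ ∑ z ∈ Fintype.piFinset fun _ : ι => V, Δ := sum_le_sum fun z _ => hΔ z
    _ = #V ^ Fintype.card ι * Δ := by simp [Fintype.card_piFinset]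

/-- Homomorphisms to the graph `P` on `V` from the complete bipartite graph whose two sides are
copies of `ZMod k`. -/
def homs (V : Finset ℕ) (P : Finset (ℕ × ℕ)) (k : ℕ) [NeZero k] :
    Finset (ZMod k ⊕ ZMod k → ℕ) :=
  (Fintype.piFinset fun _ => V).filter fun z => ∀ i j, (z (Sum.inl i), z (Sum.inr j)) ∈ P

theorem sum_pow_ge {α : Type*} (s : Finset α) (f : α → ℕ) (k : ℕ) (hk : 0 < k) :
    (∑ a ∈ s, f a) ^ k ≤ #s ^ (k - 1) * ∑ a ∈ s, f a ^ k := by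
  obtain ⟨k, rfl⟩ := Nat.exists_eq_succ_of_ne_zero hk.ne'
  simpa using pow_sum_le_card_mul_sum_pow (s := s) (f := f) (fun _ _ => Nat.zero_le _) k

/-- Supersaturation for `K_{k,k}`, obtained from Jensen's inequality for the degrees in `P` and then
for the sizes of the common neighbourhoods `N x` of `k`-tuples `x`. -/
theorem homs_lower (V : Finset ℕ) (P : Finset (ℕ × ℕ)) (hP : P ⊆ V ×ˢ V) (k : ℕ) [NeZero k] :
    #P ^ (k ^ 2) ≤
      #V ^ (2 * k * (k - 1)) * #(homs V P k) := by
  have hk : 0 < k := Nat.pos_of_ne_zero (NeZero.ne k)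
  set X : Finset (ZMod k → ℕ) := Fintype.piFinset fun _ => V with hX
  set N : (ZMod k → ℕ) → Finset ℕ := fun x => V.filter fun b => ∀ i, (x i, b) ∈ P with hN
  have hXcard : #X = #V ^ k := by simp [hX, Fintype.card_piFinset, ZMod.card]
  have h1 : #P = ∑ b ∈ V, #(V.filter fun a => (a, b) ∈ P) := by
    have hPf : P = (V ×ˢ V).filter fun p => (p.1, p.2) ∈ P := by
      ext p
      rw [mem_filter]
      exact ⟨fun h => ⟨hP h, h⟩, fun h => h.2⟩
    conv_lhs => rw [hPf]
    rw [card_filter, sum_product_right]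
    simp only [card_filter]
  have h2 : ∑ x ∈ X, #(N x) = ∑ b ∈ V, #(V.filter fun a => (a, b) ∈ P) ^ k := by
    have := sum_card_bipartiteAbove_eq_sum_card_bipartiteBelow (s := X) (t := V)
      (fun x b => ∀ i, (x i, b) ∈ P)
    refine Eq.trans (sum_congr rfl fun x _ => ?_) (this.trans (sum_congr rfl fun b _ => ?_))
    · congr 1
    · have hpi : X.bipartiteBelow (fun x b => ∀ i, (x i, b) ∈ P) b =
          Fintype.piFinset fun _ => V.filter fun a => (a, b) ∈ P := by
        ext x
        simp only [mem_bipartiteBelow, hX, Fintype.mem_piFinset, mem_filter, forall_and]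
      rw [hpi]
      simp [Fintype.card_piFinset, ZMod.card]
  have h3 : ∑ x ∈ X, #(N x) ^ k ≤ #(homs V P k) := by
    have : ∑ x ∈ X, #(N x) ^ k = #(X.sigma fun x => Fintype.piFinset fun _ : ZMod k => N x) := by
      rw [card_sigma]
      simp [Fintype.card_piFinset, ZMod.card]
    rw [this]
    refine card_le_card_of_injOn (fun p => Sum.elim p.1 p.2) ?_ ?_
    · rintro ⟨x, y⟩ hp
      obtain ⟨hx, hy⟩ := mem_sigma.1 (mem_coe.1 hp)
      have hx := Fintype.mem_piFinset.1 hx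
      have hy := fun j => mem_filter.1 (Fintype.mem_piFinset.1 hy j)
      refine mem_coe.2 (mem_filter.2 ⟨Fintype.mem_piFinset.2 ?_, fun i j => (hy j).2 i⟩)
      rintro (i | j)
      · exact hx i
      · exact (hy j).1
    · rintro ⟨x, y⟩ - ⟨x', y'⟩ - h
      have hx : x = x' := funext fun i => congrFun h (Sum.inl i)
      have hy : y = y' := funext fun i => congrFun h (Sum.inr i)
      rw [hx, hy]
  have h4 := sum_pow_ge V (fun b => #(V.filter fun a => (a, b) ∈ P)) k hk
  have h5 := sum_pow_ge X (fun x => #(N x)) k hk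
  rw [← h1, ← h2] at h4
  calc #P ^ (k ^ 2)
      = (#P ^ k) ^ k := by rw [← pow_mul, sq]
    _ ≤ (#V ^ (k - 1) * ∑ x ∈ X, #(N x)) ^ k := Nat.pow_le_pow_left h4 k
    _ = #V ^ (k * (k - 1)) * (∑ x ∈ X, #(N x)) ^ k := by rw [mul_pow, ← pow_mul, mul_comm k]
    _ ≤ #V ^ (k * (k - 1)) * (#X ^ (k - 1) * ∑ x ∈ X, #(N x) ^ k) := by gcongr
    _ = #V ^ (2 * k * (k - 1)) * ∑ x ∈ X, #(N x) ^ k := by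
      rw [hXcard, ← pow_mul, ← mul_assoc, ← pow_add]; congr 2; ring
    _ ≤ _ := by gcongr

/-! ### A pair of large codegree -/

/-- For even `k` the cycle of length `k` embeds in `K_{k,k}`: even residues go to the left side, odd
ones to the right side. -/
theorem exists_parity_embedding {k : ℕ} (hke : Even k) :
    ∃ σ : ZMod k → ZMod k ⊕ ZMod k, Function.Injective σ ∧ ∀ i,
      (∃ a b, σ i = Sum.inl a ∧ σ (i + 1) = Sum.inr b) ∨
      (∃ a b, σ i = Sum.inr a ∧ σ (i + 1) = Sum.inl b) := by
  set p := ZMod.castHom hke.two_dvd (ZMod 2)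
  refine ⟨fun i => if p i = 0 then Sum.inl i else Sum.inr i, ?_, ?_⟩
  · intro i j h
    simp only at h
    split_ifs at h <;> simpa using h
  · intro i
    have h01 : ∀ x : ZMod 2, x = 0 ∨ x = 1 := by decide
    rcases h01 (p i) with h | h
    · left
      exact ⟨i, i + 1, by simp [h], by simp [h]⟩
    · right
      refine ⟨i, i + 1, by simp [h], ?_⟩
      have : (1 + 1 : ZMod 2) = 0 := by decide
      simp [h, this]

/-- In a `C_k`-free triple system of maximum codegree at most `Δ`, every copy of `K_{k,k}` in the
shadow is degenerate. The sets `B1`, `B2`, `B3` in the proof collect the copies for which two cycle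
vertices coincide, an extra vertex is a cycle vertex, or two extra vertices coincide. -/
theorem homs_upper (hH : H ⊆ V.powersetCard 3) {k : ℕ} [NeZero k] (hk : 4 ≤ k) (hke : Even k)
    (hfree : ¬ HasLooseCycle k H) (Δ : ℕ) (hΔ1 : 1 ≤ Δ)
    (hΔ : ∀ a b, #(coNbrs V H a b) ≤ Δ) :
    #(homs V (shadowPairs V H) k) * #V ≤ 3 * k ^ 2 * (#V ^ (2 * k) * Δ) := by
  obtain ⟨σ, hσ, hpar⟩ := exists_parity_embedding hke
  have hone : (1 : ZMod k) ≠ 0 := by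
    exact_mod_cast zmod_natCast_ne_zero (k := k) 1 (by omega) (by omega)
  have htwo : (2 : ZMod k) ≠ 0 := by
    exact_mod_cast zmod_natCast_ne_zero (k := k) 2 (by omega) (by omega)
  have hex : ∀ a b, ∃ c, (a, b) ∈ shadowPairs V H → ({a, b, c} : Finset ℕ) ∈ H := by
    intro a b
    by_cases h : (a, b) ∈ shadowPairs V H
    · obtain ⟨c, hc⟩ := (mem_shadowPairs hH).1 h
      exact ⟨c, fun _ => hc⟩
    · exact ⟨0, fun h' => absurd h' h⟩
  choose χ hχ using hex
  set 𝓗 := homs V (shadowPairs V H) k with h𝓗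
  have hV : 𝓗 ⊆ Fintype.piFinset fun _ => V := filter_subset _ _
  have hcard : Fintype.card (ZMod k ⊕ ZMod k) = 2 * k := by simp [ZMod.card]; ring
  set w : (ZMod k ⊕ ZMod k → ℕ) → ZMod k → ℕ := fun z i => χ (z (σ i)) (z (σ (i + 1))) with hw
  have hedge : ∀ z ∈ 𝓗, ∀ i, ({z (σ i), z (σ (i + 1)), w z i} : Finset ℕ) ∈ H := by
    intro z hz i
    have hz := (mem_filter.1 hz).2
    refine hχ _ _ ?_
    rcases hpar i with ⟨a, b, ha, hb⟩ | ⟨a, b, ha, hb⟩ <;> rw [ha, hb]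
    · exact hz a b
    · exact shadowPairs_symm hH (hz b a)
  -- the three kinds of coincidence
  set B1 : ZMod k → ZMod k → Finset (ZMod k ⊕ ZMod k → ℕ) := fun i j =>
    𝓗.filter fun z => i ≠ j ∧ z (σ i) = z (σ j) with hB1
  set B2 : ZMod k → ZMod k → Finset (ZMod k ⊕ ZMod k → ℕ) := fun i j =>
    𝓗.filter fun z => j ≠ i ∧ j ≠ i + 1 ∧ z (σ j) = w z i with hB2
  set B3 : ZMod k → ZMod k → Finset (ZMod k ⊕ ZMod k → ℕ) := fun i j =>
    𝓗.filter fun z => i ≠ j ∧ w z i = w z j with hB3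
  have hb1 : ∀ i j, #(B1 i j) * #V ≤ #V ^ (2 * k) * Δ := by
    intro i j
    by_cases hij : i ≠ j
    · rw [← hcard]
      refine card_mul_le_of_coord (B1 i j) ((filter_subset _ _).trans hV) (σ i)
        (fun z => {z (σ j)}) ?_ Δ (by simpa using hΔ1) ?_
      · intro z a
        simp [Function.update_of_ne (hσ.ne hij.symm)]
      · intro z hz
        simpa using (mem_filter.1 hz).2.2
    · simp [hB1, hij]
  have hb2 : ∀ i j, #(B2 i j) * #V ≤ #V ^ (2 * k) * Δ := by
    intro i j
    by_cases hij : j ≠ i ∧ j ≠ i + 1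
    · rw [← hcard]
      refine card_mul_le_of_coord (B2 i j) ((filter_subset _ _).trans hV) (σ j)
        (fun z => {w z i}) ?_ Δ (by simpa using hΔ1) ?_
      · intro z a
        simp only [hw]
        rw [Function.update_of_ne (hσ.ne hij.1.symm), Function.update_of_ne (hσ.ne hij.2.symm)]
      · intro z hz
        simpa using (mem_filter.1 hz).2.2.2
    · have : B2 i j = ∅ := filter_eq_empty_iff.2 fun z _ h => hij ⟨h.1, h.2.1⟩
      simp [this]
  have hb3 : ∀ i j, #(B3 i j) * #V ≤ #V ^ (2 * k) * Δ := by
    intro i j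
    by_cases hij : i = j
    · have : B3 i j = ∅ := filter_eq_empty_iff.2 fun z _ h => h.1 hij
      simp [this]
    -- the edge `{j, j + 1}` has an endpoint `t` outside `{i, i + 1}`; `s` is the other one
    obtain ⟨t, s, hti, hti1, hts, hst⟩ : ∃ t s : ZMod k, t ≠ i ∧ t ≠ i + 1 ∧ s ≠ t ∧
        ((t = j ∧ s = j + 1) ∨ (t = j + 1 ∧ s = j)) := by
      by_cases hj : j = i + 1
      · refine ⟨j + 1, j, ?_, ?_, by simpa using hone, Or.inr ⟨rfl, rfl⟩⟩
        · rw [hj, add_assoc, one_add_one_eq_two]; simpa using htwo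
        · rw [hj]; simpa using hone
      · exact ⟨j, j + 1, Ne.symm hij, hj, by simpa using hone, Or.inl ⟨rfl, rfl⟩⟩
    rw [← hcard]
    refine card_mul_le_of_coord (B3 i j) ((filter_subset _ _).trans hV) (σ t)
      (fun z => coNbrs V H (z (σ s)) (w z i)) ?_ Δ (fun z => hΔ _ _) ?_
    · intro z a
      simp only [hw]
      rw [Function.update_of_ne (hσ.ne hti.symm), Function.update_of_ne (hσ.ne hti1.symm),
        Function.update_of_ne (hσ.ne hts)]
    · intro z hz
      obtain ⟨hz, -, hwij⟩ := mem_filter.1 hz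
      rw [mem_coNbrs hH, hwij]
      have := hedge z hz j
      rcases hst with ⟨rfl, rfl⟩ | ⟨rfl, rfl⟩
      · rwa [insert_comm, pair_comm] at this
      · rwa [pair_comm]
  have hcover : 𝓗 ⊆ (univ : Finset (ZMod k × ZMod k)).biUnion fun q =>
      B1 q.1 q.2 ∪ B2 q.1 q.2 ∪ B3 q.1 q.2 := by
    intro z hz
    by_contra hnot
    simp only [mem_biUnion, mem_univ, true_and, mem_union, not_exists, not_or, Prod.forall] at hnot
    refine hfree (hasLooseCycle_of_expansion hk (fun i => z (σ i)) (w z) ?_ ?_ ?_ (hedge z hz))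
    · intro i j h
      by_contra hne
      exact (hnot i j).1.1 (mem_filter.2 ⟨hz, hne, h⟩)
    · intro i j h
      by_contra hne
      exact (hnot i j).2 (mem_filter.2 ⟨hz, hne, h⟩)
    · intro i j h
      have hp := edge_props hH (hedge z hz i)
      refine (hnot i j).1.2 (mem_filter.2 ⟨hz, ?_, ?_, h.symm⟩)
      · rintro rfl
        exact hp.2.1 h.symm
      · rintro rfl
        exact hp.2.2.1 h.symm
  calc #𝓗 * #V ≤ (∑ q : ZMod k × ZMod k, (#(B1 q.1 q.2) + #(B2 q.1 q.2) + #(B3 q.1 q.2))) * #V := by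
        gcongr
        refine (card_le_card hcover).trans (card_biUnion_le.trans (sum_le_sum fun q _ => ?_))
        exact (card_union_le _ _).trans (Nat.add_le_add_right (card_union_le _ _) _)
    _ = ∑ q : ZMod k × ZMod k, (#(B1 q.1 q.2) + #(B2 q.1 q.2) + #(B3 q.1 q.2)) * #V := sum_mul _ _ _
    _ ≤ ∑ q : ZMod k × ZMod k, 3 * (#V ^ (2 * k) * Δ) := by
        refine sum_le_sum fun q _ => ?_
        have h1 := hb1 q.1 q.2
        have h2 := hb2 q.1 q.2
        have h3 := hb3 q.1 q.2
        rw [add_mul, add_mul]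
        omega
    _ = 3 * k ^ 2 * (#V ^ (2 * k) * Δ) := by
        simp [ZMod.card]; ring

theorem codegree_bound (hH : H ⊆ V.powersetCard 3) {k : ℕ} (hk : 4 ≤ k) (hke : Even k)
    (hfree : ¬ HasLooseCycle k H) (Δ : ℕ) (hΔ1 : 1 ≤ Δ)
    (hΔ : ∀ a b, #(coNbrs V H a b) ≤ Δ) :
    #H ^ (k ^ 2) * #V ≤ (2 * k) ^ (k ^ 2) * (3 * k ^ 2) * #V ^ (2 * k ^ 2) * Δ := by
  have : NeZero k := ⟨by omega⟩
  have h1 := card_le_shadow hk V #H H rfl hH hfree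
  have h2 := homs_lower V (shadowPairs V H) (filter_subset _ _) k
  have h3 := homs_upper hH hk hke hfree Δ hΔ1 hΔ
  set T := #(homs V (shadowPairs V H) k)
  have hexp : 2 * k * (k - 1) + 2 * k = 2 * k ^ 2 := by
    obtain ⟨j, rfl⟩ : ∃ j, k = j + 1 := ⟨k - 1, by omega⟩
    simp; ring
  calc #H ^ (k ^ 2) * #V ≤ (2 * k * #(shadowPairs V H)) ^ (k ^ 2) * #V := by gcongr
    _ = (2 * k) ^ (k ^ 2) * (#(shadowPairs V H) ^ (k ^ 2) * #V) := by rw [mul_pow, mul_assoc]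
    _ ≤ (2 * k) ^ (k ^ 2) * (#V ^ (2 * k * (k - 1)) * T * #V) := by gcongr
    _ = (2 * k) ^ (k ^ 2) * (#V ^ (2 * k * (k - 1)) * (T * #V)) := by rw [mul_assoc (_ ^ _) T]
    _ ≤ (2 * k) ^ (k ^ 2) * (#V ^ (2 * k * (k - 1)) * (3 * k ^ 2 * (#V ^ (2 * k) * Δ))) := by gcongr
    _ = _ := by rw [← hexp, pow_add]; ring

/-- Some pair has codegree at least `c (m / n²)^(k²) n`, where `m = |H|`, `n = |V|` and
`c = 1 / ((2k)^(k²) 3k²)`. -/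
theorem exists_rich_pair (hH : H ⊆ V.powersetCard 3) {k : ℕ} (hk : 4 ≤ k) (hke : Even k)
    (hfree : ¬ HasLooseCycle k H) (hne : H.Nonempty) :
    ∃ a ∈ V, ∃ b ∈ V,
      #H ^ (k ^ 2) * #V ≤
        (2 * k) ^ (k ^ 2) * (3 * k ^ 2) * #V ^ (2 * k ^ 2) * #(coNbrs V H a b) := by
  obtain ⟨e, he⟩ := hne
  obtain ⟨x, y, c, -, -, -, rfl⟩ := card_eq_three.1 (mem_powersetCard.1 (hH he)).2
  have hp := edge_props hH he
  obtain ⟨⟨a, b⟩, hab, hmax⟩ := exists_max_image (V ×ˢ V) (fun p => #(coNbrs V H p.1 p.2))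
    ⟨(x, y), mem_product.2 ⟨hp.2.2.2.1, hp.2.2.2.2.1⟩⟩
  refine ⟨a, (mem_product.1 hab).1, b, (mem_product.1 hab).2,
    codegree_bound hH hk hke hfree _ ?_ ?_⟩
  · have : 0 < #(coNbrs V H x y) := card_pos.2 ⟨c, (mem_coNbrs hH).2 he⟩
    exact this.trans_le (hmax (x, y) (mem_product.2 ⟨hp.2.2.2.1, hp.2.2.2.2.1⟩))
  · intro x' y'
    rcases (coNbrs V H x' y').eq_empty_or_nonempty with h | ⟨z, hz⟩
    · simp [h]
    · have hp' := edge_props hH ((mem_coNbrs hH).1 hz)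
      exact hmax (x', y') (mem_product.2 ⟨hp'.2.2.2.1, hp'.2.2.2.2.1⟩)

/-! ### The recursion on the number of edges -/

open Classical in
/-- The `C_k`-free triple systems on `V` with exactly `m` edges. -/
noncomputable def freeFamily (V : Finset ℕ) (k m : ℕ) : Finset (Finset (Finset ℕ)) :=
  (V.powersetCard 3).powerset.filter fun H => ¬ HasLooseCycle k H ∧ #H = m

theorem mem_freeFamily {k m : ℕ} :
    H ∈ freeFamily V k m ↔ H ⊆ V.powersetCard 3 ∧ ¬ HasLooseCycle k H ∧ #H = m := by
  simp [freeFamily]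

theorem card_freeFamily_step {k m d : ℕ}
    (hrich : ∀ H ∈ freeFamily V k m, ∃ a ∈ V, ∃ b ∈ V, d ≤ #(coNbrs V H a b)) :
    #(freeFamily V k m) ≤ #V ^ 2 * (#V).choose d * #(freeFamily V k (m - d)) := by
  have hsub : freeFamily V k m ⊆
      (((V ×ˢ V) ×ˢ V.powersetCard d) ×ˢ freeFamily V k (m - d)).image
        fun q => q.2 ∪ q.1.2.image fun z => {q.1.1.1, q.1.1.2, z} := by
    intro H hHm
    obtain ⟨a, ha, b, hb, hd⟩ := hrich H hHm
    obtain ⟨hH, hfree, hm⟩ := mem_freeFamily.1 hHm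
    obtain ⟨T, hT, hTd⟩ := exists_subset_card_eq hd
    set S : Finset (Finset ℕ) := T.image fun z => {a, b, z} with hS
    have hedge : ∀ z ∈ T, ({a, b, z} : Finset ℕ) ∈ H := fun z hz => (mem_coNbrs hH).1 (hT hz)
    have hSH : S ⊆ H := by
      intro e he
      obtain ⟨z, hz, rfl⟩ := mem_image.1 he
      exact hedge z hz
    have hScard : #S = d := by
      rw [hS, card_image_of_injOn, hTd]
      intro z hz z' hz' h
      have hp := edge_props hH (hedge z hz)
      have : z ∈ ({a, b, z'} : Finset ℕ) := by
        simp only at h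
        rw [← h]; simp
      simp only [mem_insert, mem_singleton] at this
      rcases this with h | h | h
      · exact absurd h.symm hp.2.1
      · exact absurd h.symm hp.2.2.1
      · exact h
    refine mem_image.2 ⟨(((a, b), T), H \ S), ?_, sdiff_union_of_subset hSH⟩
    simp only [mem_product, mem_powersetCard]
    refine ⟨⟨⟨ha, hb⟩, hT.trans (filter_subset _ _), hTd⟩, mem_freeFamily.2
      ⟨sdiff_subset.trans hH, fun h => hfree (h.mono sdiff_subset), ?_⟩⟩
    rw [card_sdiff_of_subset hSH, hScard, hm]
  refine (card_le_card hsub).trans (card_image_le.trans_eq ?_)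
  simp [card_product, card_powersetCard, sq]

/-- The analytic step of the recursion: when `d` is at least `(m / n²)^s n / D`, the cost
`n² (n choose d)` of specifying `d` edges through a common pair is paid for by the decrease of the
potential `K n √m` as `m` drops to `m - d`. -/
theorem step_estimate {n m d k s : ℕ} {D K : ℝ} (hn : 0 < n) (hm : 0 < m) (hk : 0 < k)
    (hmn : m ≤ 2 * k * n ^ 2) (hd : 0 < d) (hdm : d ≤ m) (hD : 0 ≤ D)
    (hrich : (m : ℝ) ^ s * n ≤ D * (n : ℝ) ^ (2 * s) * d)
    (hK : K = 2 * ((3 + 3 * D) * (2 * k) + 6 * s)) :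
    (n : ℝ) ^ 2 * (n.choose d : ℝ) * Real.exp (K * n * √((m - d : ℕ) : ℝ)) ≤
      Real.exp (K * n * √(m : ℝ)) := by
  have hn' : (0 : ℝ) < n := by exact_mod_cast hn
  have hm' : (0 : ℝ) < m := by exact_mod_cast hm
  have hd1 : (1 : ℝ) ≤ d := by exact_mod_cast hd
  have hk1 : (1 : ℝ) ≤ k := by exact_mod_cast hk
  have hsm : 0 < √(m : ℝ) := Real.sqrt_pos.2 hm'
  have hsq : √(m : ℝ) ^ 2 = m := Real.sq_sqrt hm'.le
  have hs0 : (0 : ℝ) ≤ s := Nat.cast_nonneg s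
  set u : ℝ := n / √(m : ℝ) with hu
  have hu0 : 0 < u := by positivity
  have hun : u * √(m : ℝ) = n := by rw [hu]; field_simp
  have hu1 : 1 ≤ 2 * k * u := by
    have h1 : (m : ℝ) ≤ 2 * k * n ^ 2 := by exact_mod_cast hmn
    have h2 : √(m : ℝ) ≤ 2 * k * n := by
      apply Real.sqrt_le_iff.2 ⟨by positivity, ?_⟩
      nlinarith [sq_nonneg (n : ℝ), mul_nonneg (sub_nonneg.2 hk1) (sq_nonneg (n : ℝ)),
        mul_nonneg (mul_nonneg (sub_nonneg.2 hk1) (by linarith : (0 : ℝ) ≤ k)) (sq_nonneg (n : ℝ))]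
    rw [hu, mul_div_assoc', le_div_iff₀ hsm, one_mul]
    exact h2
  set A : ℝ := D * u ^ (2 * s) with hA
  have hA0 : 0 ≤ A := by positivity
  have hnA : (n : ℝ) ≤ d * A := by
    have h1 : u ^ (2 * s) * (m : ℝ) ^ s = (n : ℝ) ^ (2 * s) := by
      rw [← hun, mul_pow, pow_mul (√(m : ℝ)), hsq]
    have h2 : (n : ℝ) * m ^ s ≤ d * A * m ^ s := by
      calc (n : ℝ) * m ^ s = m ^ s * n := mul_comm _ _
        _ ≤ D * (n : ℝ) ^ (2 * s) * d := hrich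
        _ = d * A * m ^ s := by rw [hA, ← h1]; ring
    exact le_of_mul_le_mul_right h2 (by positivity)
  set X : ℝ := D + 2 * s * u with hX
  have hX0 : 0 ≤ X := by positivity
  have hAX : A ≤ Real.exp X := by
    have h1 : D ≤ Real.exp D := by linarith [Real.add_one_le_exp D]
    have h2 : u ≤ Real.exp u := by linarith [Real.add_one_le_exp u]
    calc A ≤ Real.exp D * Real.exp u ^ (2 * s) := by rw [hA]; gcongr
      _ = Real.exp X := by
        rw [← Real.exp_nat_mul, ← Real.exp_add, hX]; push_cast; ring_nf
  have hde : (d : ℝ) ≤ Real.exp d := by linarith [Real.add_one_le_exp (d : ℝ)]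
  have hsquare : (n : ℝ) ^ 2 ≤ Real.exp (2 * d + 2 * X) := by
    calc (n : ℝ) ^ 2 ≤ (Real.exp d * Real.exp X) ^ 2 := by
          gcongr
          exact hnA.trans (by gcongr)
      _ = Real.exp (2 * d + 2 * X) := by
        rw [← Real.exp_add, ← Real.exp_nat_mul]; push_cast; ring_nf
  have hchoose : (n.choose d : ℝ) ≤ Real.exp (d * X + d) := by
    calc (n.choose d : ℝ) ≤ (n : ℝ) ^ d / d.factorial := Nat.choose_le_pow_div d n
      _ ≤ (d * A) ^ d / d.factorial := by gcongr
      _ = A ^ d * ((d : ℝ) ^ d / d.factorial) := by rw [mul_pow]; ring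
      _ ≤ Real.exp X ^ d * Real.exp d := by
          gcongr
          exact Real.pow_div_factorial_le_exp (d : ℝ) (by positivity) d
      _ = Real.exp (d * X + d) := by rw [← Real.exp_nat_mul, ← Real.exp_add]
  -- removing `d` edges lowers `√m` by at least `d / (2 √m)`
  have hdiff : (d : ℝ) ≤ 2 * √(m : ℝ) * (√(m : ℝ) - √((m - d : ℕ) : ℝ)) := by
    have h1 : √((m - d : ℕ) : ℝ) ≤ √(m : ℝ) := Real.sqrt_le_sqrt (by exact_mod_cast Nat.sub_le m d)
    have h2 : √((m - d : ℕ) : ℝ) ^ 2 = m - d := by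
      rw [Real.sq_sqrt (by positivity), Nat.cast_sub hdm]
    nlinarith [sq_nonneg (√(m : ℝ) - √((m - d : ℕ) : ℝ))]
  have hK0 : 0 ≤ K := by rw [hK]; positivity
  have hcost : 3 + 3 * X ≤ K * u / 2 := by
    rw [hK, hX]
    nlinarith [mul_nonneg (by linarith : (0 : ℝ) ≤ 3 + 3 * D) (sub_nonneg.2 hu1)]
  have hgain : K * u / 2 * d ≤ K * n * (√(m : ℝ) - √((m - d : ℕ) : ℝ)) := by
    calc K * u / 2 * d ≤ K * u / 2 * (2 * √(m : ℝ) * (√(m : ℝ) - √((m - d : ℕ) : ℝ))) := by gcongr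
      _ = K * (u * √(m : ℝ)) * (√(m : ℝ) - √((m - d : ℕ) : ℝ)) := by ring
      _ = _ := by rw [hun]
  calc (n : ℝ) ^ 2 * (n.choose d : ℝ) * Real.exp (K * n * √((m - d : ℕ) : ℝ))
      ≤ Real.exp (2 * d + 2 * X) * Real.exp (d * X + d) * Real.exp (K * n * √((m - d : ℕ) : ℝ)) := by
        gcongr
    _ = Real.exp (2 * d + 2 * X + (d * X + d) + K * n * √((m - d : ℕ) : ℝ)) := by
        rw [← Real.exp_add, ← Real.exp_add]
    _ ≤ Real.exp (K * n * √(m : ℝ)) := by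
        apply Real.exp_le_exp.2
        have h1 : 2 * d + 2 * X + (d * X + d) ≤ (3 + 3 * X) * d := by
          nlinarith [mul_nonneg hX0 (sub_nonneg.2 hd1)]
        have h2 : (3 + 3 * X) * d ≤ K * u / 2 * d := by gcongr
        linarith

theorem card_le_of_free (hH : H ⊆ V.powersetCard 3) {k : ℕ} (hk : 4 ≤ k)
    (hfree : ¬ HasLooseCycle k H) : #H ≤ 2 * k * #V ^ 2 := by
  refine (card_le_shadow hk V _ H rfl hH hfree).trans (Nat.mul_le_mul_left _ ?_)
  exact (card_le_card (filter_subset _ _)).trans_eq (by rw [card_product, sq])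

theorem card_freeFamily_le {k : ℕ} (hk : 4 ≤ k) (hke : Even k) (hV : 0 < #V) {D K : ℝ}
    (hD : D = (2 * k) ^ (k ^ 2) * (3 * k ^ 2))
    (hK : K = 2 * ((3 + 3 * D) * (2 * k) + 6 * (k ^ 2 : ℕ))) (m : ℕ) :
    (#(freeFamily V k m) : ℝ) ≤ Real.exp (K * #V * √(m : ℝ)) := by
  induction m using Nat.strong_induction_on with
  | _ m ih =>
  rcases (freeFamily V k m).eq_empty_or_nonempty with hemp | ⟨H₀, hH₀⟩
  · rw [hemp]; simp; positivity
  rcases Nat.eq_zero_or_pos m with rfl | hm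
  · have : freeFamily V k 0 ⊆ {∅} := by
      intro H hH
      simpa using (mem_freeFamily.1 hH).2.2
    have := card_le_card this
    simp only [card_singleton] at this
    simpa using this
  have hk0 : (0 : ℝ) < k := by exact_mod_cast (by omega : 0 < k)
  have hV' : (0 : ℝ) < #V := by exact_mod_cast hV
  have hm' : (0 : ℝ) < m := by exact_mod_cast hm
  have hD0 : 0 < D := by rw [hD]; positivity
  set q : ℝ := (m : ℝ) ^ (k ^ 2) * #V / (D * (#V : ℝ) ^ (2 * k ^ 2)) with hq
  have hq0 : 0 < q := by positivity
  set d : ℕ := ⌈q⌉₊ with hd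
  have hrich : ∀ H ∈ freeFamily V k m, ∃ a ∈ V, ∃ b ∈ V, d ≤ #(coNbrs V H a b) := by
    intro H hHm
    obtain ⟨hH, hfree, hcard⟩ := mem_freeFamily.1 hHm
    obtain ⟨a, ha, b, hb, hab⟩ := exists_rich_pair hH hk hke hfree (card_pos.1 (by omega))
    refine ⟨a, ha, b, hb, Nat.ceil_le.2 ?_⟩
    rw [hq, div_le_iff₀ (by positivity), hD]
    rw [hcard] at hab
    have : (m : ℝ) ^ (k ^ 2) * #V ≤
        (2 * k) ^ (k ^ 2) * (3 * k ^ 2) * (#V : ℝ) ^ (2 * k ^ 2) * #(coNbrs V H a b) := by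
      exact_mod_cast hab
    linarith
  obtain ⟨hH₀s, hfree₀, hcard₀⟩ := mem_freeFamily.1 hH₀
  have hmn : m ≤ 2 * k * #V ^ 2 := hcard₀ ▸ card_le_of_free hH₀s hk hfree₀
  have hd0 : 0 < d := Nat.ceil_pos.2 hq0
  have hdm : d ≤ m := by
    obtain ⟨a, -, b, -, hab⟩ := hrich H₀ hH₀
    refine hab.trans (hcard₀ ▸ card_le_card_of_injOn (fun z => {a, b, z}) ?_ ?_)
    · intro z hz
      exact (mem_coNbrs hH₀s).1 hz
    · intro z hz z' hz' h
      have hp := edge_props hH₀s ((mem_coNbrs hH₀s).1 hz)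
      have : z ∈ ({a, b, z'} : Finset ℕ) := by
        simp only at h
        rw [← h]; simp
      simp only [mem_insert, mem_singleton] at this
      rcases this with h | h | h
      · exact absurd h.symm hp.2.1
      · exact absurd h.symm hp.2.2.1
      · exact h
  have hqd : (m : ℝ) ^ (k ^ 2) * #V ≤ D * (#V : ℝ) ^ (2 * k ^ 2) * d := by
    have := Nat.le_ceil q
    rw [hq, div_le_iff₀ (by positivity)] at this
    rw [mul_comm _ (d : ℝ)]
    exact this
  calc (#(freeFamily V k m) : ℝ)
      ≤ (#V : ℝ) ^ 2 * ((#V).choose d : ℝ) * #(freeFamily V k (m - d)) := by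
        exact_mod_cast card_freeFamily_step hrich
    _ ≤ (#V : ℝ) ^ 2 * ((#V).choose d : ℝ) * Real.exp (K * #V * √((m - d : ℕ) : ℝ)) := by
        gcongr
        exact ih (m - d) (by omega)
    _ ≤ _ := step_estimate hV hm (by omega) hmn hd0 hdm hD0.le hqd hK

end CkFree

open Finset in
/-- For every even `k ≥ 4` there exists `c > 0` such that for all `n > 0`, the number of
`C_k`-free 3-uniform hypergraphs with vertex set `[n]` is at most `2^(c·n²)`. -/
theorem number_of_Ck_free_triple_systems (k : ℕ) (hk : 4 ≤ k) (hke : Even k) :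
    ∃ c : ℝ, 0 < c ∧ ∀ n : ℕ, 0 < n →
      (({H : Finset (Finset ℕ) |
          H ⊆ (Finset.Icc 1 n).powersetCard 3 ∧ ¬ HasLooseCycle k H} : Set _).ncard : ℝ)
        ≤ (2 : ℝ) ^ (c * (n : ℝ) ^ 2) := by
  set D : ℝ := (2 * k) ^ (k ^ 2) * (3 * k ^ 2) with hD
  set K : ℝ := 2 * ((3 + 3 * D) * (2 * k) + 6 * (k ^ 2 : ℕ)) with hK
  have hk1 : (1 : ℝ) ≤ k := by exact_mod_cast (by omega : 1 ≤ k)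
  have hK0 : 0 < K := by positivity
  refine ⟨(2 * k + K * (2 * k)) / Real.log 2, by positivity, fun n hn => ?_⟩
  set V : Finset ℕ := Finset.Icc 1 n with hV
  have hVn : #V = n := by simp [hV]
  have hcover : {H : Finset (Finset ℕ) | H ⊆ V.powersetCard 3 ∧ ¬ HasLooseCycle k H} ⊆
      ((range (2 * k * n ^ 2 + 1)).biUnion fun m => freeFamily V k m : Finset _) := by
    rintro H ⟨hH, hfree⟩
    have := card_le_of_free hH hk hfree
    rw [hVn] at this
    exact mem_coe.2 (mem_biUnion.2
      ⟨#H, by simpa using Nat.lt_succ_of_le this, mem_freeFamily.2 ⟨hH, hfree, rfl⟩⟩)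
  have hncard := (Set.ncard_le_ncard hcover (Finset.finite_toSet _)).trans_eq
    (Set.ncard_coe_finset _)
  have hsum := hncard.trans card_biUnion_le
  have hterm : ∀ m ∈ range (2 * k * n ^ 2 + 1),
      (#(freeFamily V k m) : ℝ) ≤ Real.exp (K * (2 * k) * n ^ 2) := by
    intro m hm
    refine (card_freeFamily_le hk hke (by omega) hD hK m).trans (Real.exp_le_exp.2 ?_)
    have h1 : (m : ℝ) ≤ 2 * k * n ^ 2 := by exact_mod_cast Nat.lt_succ_iff.1 (mem_range.1 hm)
    have h2 : √(m : ℝ) ≤ 2 * k * n := by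
      apply Real.sqrt_le_iff.2 ⟨by positivity, h1.trans ?_⟩
      have : (2 * k : ℝ) ≤ (2 * k) ^ 2 := by nlinarith
      rw [mul_pow]
      gcongr
    rw [hVn]
    calc K * n * √(m : ℝ) ≤ K * n * (2 * k * n) := by gcongr
      _ = K * (2 * k) * n ^ 2 := by ring
  calc (({H : Finset (Finset ℕ) | H ⊆ V.powersetCard 3 ∧ ¬ HasLooseCycle k H} : Set _).ncard : ℝ)
      ≤ ∑ m ∈ range (2 * k * n ^ 2 + 1), (#(freeFamily V k m) : ℝ) := by exact_mod_cast hsum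
    _ ≤ ∑ m ∈ range (2 * k * n ^ 2 + 1), Real.exp (K * (2 * k) * n ^ 2) := sum_le_sum hterm
    _ = (2 * k * n ^ 2 + 1) * Real.exp (K * (2 * k) * n ^ 2) := by simp
    _ ≤ Real.exp (2 * k * n ^ 2) * Real.exp (K * (2 * k) * n ^ 2) := by
        gcongr
        exact Real.add_one_le_exp _
    _ = (2 : ℝ) ^ ((2 * k + K * (2 * k)) / Real.log 2 * (n : ℝ) ^ 2) := by
        rw [← Real.exp_add, Real.rpow_def_of_pos two_pos]
        have : Real.log 2 ≠ 0 := (Real.log_pos one_lt_two).ne'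
        congr 1
        field_simp
end

section
/- For all integers r > 3 and k ≥ 3 there exists a constant c = c(r,k) > 0 such that for all sufficiently large n, the number of C_k-free r-uniform hypergraphs with vertex set [n] is at most 2^{c·n^{r−1}·(log n)^{(r−3)/(r−2)}}. -/
open Finset

/-! ### Loose cycles in full hypergraphs -/

/-- For every edge `e` and `x ∈ e`, the vertex `x` can be exchanged for a new one outside `e` and
outside any prescribed set of at most `D` vertices: all these sets `e.erase x` have codegree
larger than `D`, up to an additive constant. -/
def IsFull (D : ℕ) (H : Finset (Finset ℕ)) : Prop :=
  ∀ e ∈ H, ∀ x ∈ e, ∀ X : Finset ℕ, X.card ≤ D →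
    ∃ y, y ∉ X ∧ y ∉ e ∧ insert y (e.erase x) ∈ H

/-- An edge through `P` can be replaced by an edge through `P` that avoids `X` outside `P`,
exchanging one vertex at a time. -/
lemma IsFull.replace {D : ℕ} {H : Finset (Finset ℕ)} (hH : IsFull D H) (X P : Finset ℕ)
    (hX : X.card ≤ D) :
    ∀ (m : ℕ) (e : Finset ℕ), e ∈ H → P ⊆ e → ((e ∩ X) \ P).card ≤ m →
      ∃ e' ∈ H, P ⊆ e' ∧ e' ∩ X ⊆ P := by
  intro m
  induction m with
  | zero =>
    intro e he hP hc
    refine ⟨e, he, hP, ?_⟩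
    rw [← sdiff_eq_empty_iff_subset, ← card_eq_zero]
    omega
  | succ m ih =>
    intro e he hP hc
    by_cases h0 : (e ∩ X) \ P = ∅
    · exact ⟨e, he, hP, sdiff_eq_empty_iff_subset.1 h0⟩
    obtain ⟨x, hx⟩ := nonempty_iff_ne_empty.2 h0
    have hx' := hx
    simp only [mem_sdiff, mem_inter] at hx'
    obtain ⟨⟨hxe, hxX⟩, hxP⟩ := hx'
    obtain ⟨y, hyX, hye, hyH⟩ := hH e he x hxe X hX
    refine ih _ hyH (fun z hz => ?_) ?_
    · have : z ≠ x := fun h => hxP (h ▸ hz)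
      simp [this, hP hz]
    · have hsub : (insert y (e.erase x) ∩ X) \ P ⊆ ((e ∩ X) \ P).erase x := by
        intro z
        simp only [mem_sdiff, mem_inter, mem_insert, mem_erase]
        rintro ⟨⟨rfl | h, h2⟩, h3⟩
        · exact absurd h2 hyX
        · exact ⟨h.1, ⟨h.2, h2⟩, h3⟩
      have := card_le_card hsub
      rw [card_erase_of_mem hx] at this
      omega

/-- The pair `a, b` lies in a common edge, i.e. it belongs to the `2`-shadow of `H`; `a = b` is
not excluded. -/
def ShadowAdj (H : Finset (Finset ℕ)) (a b : ℕ) : Prop := ∃ e ∈ H, a ∈ e ∧ b ∈ e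

/-- Cycles in the `2`-shadow of a full hypergraph can be lengthened one vertex at a time:
replace the edge carrying the last pair by one whose other vertices are new, and insert one of
those vertices. -/
lemma IsFull.exists_shadow_cycle {D q : ℕ} {H : Finset (Finset ℕ)} (hH : IsFull D H)
    (hq : 3 ≤ q) (hcard : ∀ e ∈ H, e.card = q) (hne : H.Nonempty) :
    ∀ j, j + 2 ≤ D → ∃ u : ℕ → ℕ, Set.InjOn u (Set.Iio (j + 2)) ∧
      (∀ i < j + 1, ShadowAdj H (u i) (u (i + 1))) ∧ ShadowAdj H (u (j + 1)) (u 0) := by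
  intro j
  induction j with
  | zero =>
    intro _
    obtain ⟨e, he⟩ := hne
    obtain ⟨a, ha, b, hb, hab⟩ := one_lt_card.1 (by rw [hcard e he]; omega : 1 < e.card)
    refine ⟨fun i => if i = 0 then a else b, ?_, ?_, ⟨e, he, by simpa using hb, by simpa using ha⟩⟩
    · intro i hi i' hi' h
      simp only [Set.mem_Iio] at hi hi'
      have h1 : i = 0 ∨ i = 1 := by omega
      have h2 : i' = 0 ∨ i' = 1 := by omega
      rcases h1 with rfl | rfl <;> rcases h2 with rfl | rfl <;> simp_all
    · intro i hi
      obtain rfl : i = 0 := by omega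
      exact ⟨e, he, by simpa using ha, by simpa using hb⟩
  | succ j ih =>
    intro hD
    obtain ⟨u, hinj, hadj, e, he, h1, h2⟩ := ih (by omega)
    obtain ⟨e', he', hP, hX⟩ := hH.replace ((range (j + 2)).image u) {u (j + 1), u 0}
      (card_image_le.trans (by simpa using by omega)) _ e he
      (by intro z; simp only [mem_insert, mem_singleton]; rintro (rfl | rfl) <;> assumption) le_rfl
    obtain ⟨x, hx, hx'⟩ := exists_mem_notMem_of_card_lt_card
      (s := {u (j + 1), u 0}) (t := e')
      (by rw [hcard e' he']; exact lt_of_le_of_lt card_le_two (by omega))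
    have hnew : ∀ i < j + 2, u i ≠ x := by
      rintro i hi rfl
      exact hx' (hX (mem_inter.2 ⟨hx, mem_image_of_mem _ (by simpa using hi)⟩))
    refine ⟨Function.update u (j + 2) x, ?_, ?_, ?_⟩
    · intro i hi i' hi' h
      simp only [Set.mem_Iio] at hi hi'
      by_cases h3 : i = j + 2 <;> by_cases h4 : i' = j + 2
      · omega
      · subst h3
        rw [Function.update_self, Function.update_of_ne h4] at h
        exact absurd h.symm (hnew i' (by omega))
      · subst h4
        rw [Function.update_self, Function.update_of_ne h3] at h
        exact absurd h (hnew i (by omega))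
      · rw [Function.update_of_ne h3, Function.update_of_ne h4] at h
        exact hinj (by simp; omega) (by simp; omega) h
    · intro i hi
      by_cases h3 : i = j + 1
      · subst h3
        rw [Function.update_self, Function.update_of_ne (by omega)]
        exact ⟨e', he', hP (by simp), hx⟩
      · rw [Function.update_of_ne (by omega), Function.update_of_ne (by omega)]
        exact hadj i (by omega)
    · rw [Function.update_self, Function.update_of_ne (by omega)]
      exact ⟨e', he', hx, hP (by simp)⟩

/-- The edges carrying the pairs of a cycle in the `2`-shadow can be chosen one after the other
so that any two of them meet only where the pairs do. -/
lemma IsFull.exists_expansion {k q : ℕ} [NeZero k] {H : Finset (Finset ℕ)}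
    (hH : IsFull ((q + 1) * k) H) (hcard : ∀ e ∈ H, e.card = q) (w : ZMod k → ℕ)
    (hadj : ∀ i, ShadowAdj H (w i) (w (i + 1))) (s : Finset (ZMod k)) :
    ∃ e : ZMod k → Finset ℕ, (∀ i ∈ s, e i ∈ H ∧ {w i, w (i + 1)} ⊆ e i ∧
        e i ∩ univ.image w ⊆ {w i, w (i + 1)}) ∧
      ∀ i ∈ s, ∀ j ∈ s, i ≠ j → e i ∩ e j ⊆ {w i, w (i + 1)} ∩ {w j, w (j + 1)} := by
  classical
  induction s using Finset.induction_on with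
  | empty => exact ⟨fun _ => ∅, by simp, by simp⟩
  | insert a s ha ih =>
    obtain ⟨e, he, hpair⟩ := ih
    obtain ⟨e₀, he₀, h1, h2⟩ := hadj a
    obtain ⟨e', he', hP, hX⟩ := hH.replace (univ.image w ∪ s.biUnion e) {w a, w (a + 1)} (by
      have h3 : (univ.image w).card ≤ k := card_image_le.trans (by simp [ZMod.card])
      have h4 : (s.biUnion e).card ≤ k * q := by
        refine (card_biUnion_le_card_mul s e q fun i hi => (hcard _ (he i hi).1).le).trans ?_
        exact Nat.mul_le_mul_right _ ((card_le_univ s).trans (by simp [ZMod.card]))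
      refine (card_union_le _ _).trans ?_
      nlinarith) _ e₀ he₀
      (by intro z; simp only [mem_insert, mem_singleton]; rintro (rfl | rfl) <;> assumption) le_rfl
    have key : ∀ j ∈ s, e' ∩ e j ⊆ {w a, w (a + 1)} ∩ {w j, w (j + 1)} := by
      intro j hj z hz
      rw [mem_inter] at hz
      have hz1 : z ∈ ({w a, w (a + 1)} : Finset ℕ) :=
        hX (mem_inter.2 ⟨hz.1, mem_union_right _ (mem_biUnion.2 ⟨j, hj, hz.2⟩)⟩)
      refine mem_inter.2 ⟨hz1, (he j hj).2.2 (mem_inter.2 ⟨hz.2, ?_⟩)⟩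
      simp only [mem_insert, mem_singleton] at hz1
      rcases hz1 with rfl | rfl <;> simp
    have hne : ∀ j ∈ s, j ≠ a := fun j hj h => ha (h ▸ hj)
    refine ⟨Function.update e a e', ?_, ?_⟩
    · intro i hi
      rcases mem_insert.1 hi with rfl | hi
      · rw [Function.update_self]
        exact ⟨he', hP, (inter_subset_inter_left subset_union_left).trans hX⟩
      · rw [Function.update_of_ne (hne i hi)]
        exact he i hi
    · intro i hi j hj hij
      rcases mem_insert.1 hi with rfl | hi <;> rcases mem_insert.1 hj with rfl | hj
      · exact absurd rfl hij
      · rw [Function.update_self, Function.update_of_ne (hne j hj)]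
        exact key j hj
      · rw [Function.update_self, Function.update_of_ne (hne i ‹i ∈ s›), inter_comm (e i),
          inter_comm {w i, _}]
        exact key i ‹i ∈ s›
      · rw [Function.update_of_ne (hne i hi), Function.update_of_ne (hne j hj)]
        exact hpair i hi j hj hij

lemma IsFull.hasLooseCycle {k q : ℕ} {H : Finset (Finset ℕ)} (hk : 3 ≤ k) (hq : 3 ≤ q)
    (hH : IsFull ((q + 1) * k) H) (hcard : ∀ e ∈ H, e.card = q) (hne : H.Nonempty) :
    HasLooseCycle k H := by
  obtain ⟨m, rfl⟩ : ∃ m, k = m + 2 := ⟨k - 2, by omega⟩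
  obtain ⟨u, hinj, hadj, hlast⟩ := hH.exists_shadow_cycle hq hcard hne m (by nlinarith)
  have : Fact (1 < m + 2) := ⟨by omega⟩
  set w : ZMod (m + 2) → ℕ := fun i => u i.val with hw
  have hwinj : Function.Injective w := fun i j h =>
    ZMod.val_injective _ (hinj (ZMod.val_lt i) (ZMod.val_lt j) h)
  have hwadj : ∀ i, ShadowAdj H (w i) (w (i + 1)) := by
    intro i
    have hi := ZMod.val_lt i
    by_cases h : i.val = m + 1
    · have h0 : (i + 1).val = 0 := by
        rw [ZMod.val_add, ZMod.val_one, h]; simp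
      simpa [hw, h0, h] using hlast
    · have h0 : (i + 1).val = i.val + 1 := by
        rw [ZMod.val_add_of_lt] <;> rw [ZMod.val_one]; omega
      simpa [hw, h0] using hadj i.val (by omega)
  obtain ⟨e, he, hpair⟩ := hH.exists_expansion hcard w hwadj univ
  have hone : (1 : ZMod (m + 2)) ≠ 0 := one_ne_zero
  have htwo : (1 : ZMod (m + 2)) + 1 ≠ 0 := by
    intro h
    have : ((2 : ℕ) : ZMod (m + 2)) = 0 := by push_cast; rw [← h]; ring
    rw [ZMod.natCast_eq_zero_iff] at this
    exact absurd (Nat.le_of_dvd (by norm_num) this) (by omega)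
  have hsucc : ∀ i : ZMod (m + 2), i + 1 ≠ i := fun i h => hone (by simp at h)
  have hmem : ∀ i, w i ∈ e i ∧ w (i + 1) ∈ e i := fun i =>
    ⟨(he i (mem_univ i)).2.1 (by simp), (he i (mem_univ i)).2.1 (by simp)⟩
  have hshape : ∀ i j z, i ≠ j → z ∈ e i → z ∈ e j →
      (j = i + 1 ∧ z = w j) ∨ (i = j + 1 ∧ z = w i) := by
    intro i j z hij hi hj
    have := hpair i (mem_univ i) j (mem_univ j) hij (mem_inter.2 ⟨hi, hj⟩)
    simp only [mem_inter, mem_insert, mem_singleton] at this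
    obtain ⟨h1 | h1, h2 | h2⟩ := this
    · exact absurd (hwinj (h1.symm.trans h2)) hij
    · exact Or.inr ⟨hwinj (h1.symm.trans h2), h1⟩
    · exact Or.inl ⟨(hwinj (h1.symm.trans h2)).symm, h2⟩
    · exact absurd (add_right_cancel (hwinj (h1.symm.trans h2))) hij
  refine ⟨e, fun i => w (i + 1), ?_, ?_, fun i => (he i (mem_univ i)).1, ?_, ?_⟩
  · intro i j hij
    by_contra hij_ne
    -- two distinct indices with equal edges would share both `w i` and `w (i + 1)`
    rcases hshape i j (w i) hij_ne (hmem i).1 (hij ▸ (hmem i).1) with ⟨h1, h2⟩ | ⟨h1, h2⟩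
    · exact hij_ne (hwinj h2)
    · rcases hshape i j (w (i + 1)) hij_ne (hmem i).2 (hij ▸ (hmem i).2) with ⟨h3, h4⟩ | ⟨h3, h4⟩
      · apply htwo
        have : j + (1 + 1) = j := by rw [← add_assoc, ← h1, ← h3]
        simpa using this
      · exact hsucc i (hwinj h4)
  · exact fun i j h => add_right_cancel (hwinj h)
  · intro i
    ext z
    simp only [mem_inter, mem_singleton]
    constructor
    · rintro ⟨h1, h2⟩
      rcases hshape i (i + 1) z (hsucc i).symm h1 h2 with ⟨_, h⟩ | ⟨h, _⟩
      · exact h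
      · exfalso
        apply htwo
        have : i + (1 + 1) = i := by rw [← add_assoc, ← h]
        simpa using this
    · rintro rfl
      exact ⟨(hmem i).2, (hmem (i + 1)).1⟩
  · intro i j h1 h2 h3
    rw [eq_empty_iff_forall_notMem]
    intro z hz
    rw [mem_inter] at hz
    rcases hshape i j z h1.symm hz.1 hz.2 with ⟨h, _⟩ | ⟨h, _⟩
    · exact h2 h
    · exact h3 h

/-! ### Assigning edges to smaller sets -/

/-- A `C_k`-free `q`-graph is assigned injectively to pairs (`(q-1)`-subset of the edge, label),
with boundedly many labels. This is the degenerate form of `ex(n, C_k) = O(n^(q-1))`. -/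
lemma exists_assignment {k q : ℕ} (hk : 3 ≤ k) (hq : 3 ≤ q) :
    ∀ (m : ℕ) (H : Finset (Finset ℕ)), H.card ≤ m → (∀ e ∈ H, e.card = q) →
      ¬ HasLooseCycle k H → ∃ g : Finset ℕ → Finset ℕ × ℕ, Set.InjOn g H ∧
        ∀ e ∈ H, (∃ x ∈ e, (g e).1 = e.erase x) ∧ (g e).2 < (q + 1) * k + 1 := by
  intro m
  induction m with
  | zero =>
    intro H hm _ _
    obtain rfl : H = ∅ := by rw [← card_eq_zero]; omega
    exact ⟨fun _ => (∅, 0), by simp, by simp⟩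
  | succ m ih =>
    intro H hm hcard hfree
    rcases H.eq_empty_or_nonempty with rfl | hne
    · exact ⟨fun _ => (∅, 0), by simp, by simp⟩
    have hnf : ¬ IsFull ((q + 1) * k) H := fun h => hfree (h.hasLooseCycle hk hq hcard hne)
    simp only [IsFull, not_forall, not_exists] at hnf
    obtain ⟨e₀, he₀, x, hx, X, hX, hno⟩ := hnf
    set f := e₀.erase x with hf
    set S := H.filter (fun e => f ⊆ e) with hS
    have hform : ∀ e ∈ S, ∃ y ∈ insert x X, y ∉ f ∧ e = insert y f := by
      intro e he
      obtain ⟨heH, hfe⟩ := mem_filter.1 he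
      have hc : (e \ f).card = 1 := by
        rw [card_sdiff_of_subset hfe, hcard e heH, hf, card_erase_of_mem hx, hcard e₀ he₀]; omega
      obtain ⟨y, hy⟩ := card_eq_one.1 hc
      have hyf : y ∉ f := fun h => by
        have : y ∈ e \ f := by rw [hy]; simp
        exact (mem_sdiff.1 this).2 h
      have hey : e = insert y f := by
        rw [← sdiff_union_of_subset hfe, hy, singleton_union]
      refine ⟨y, ?_, hyf, hey⟩
      by_contra hyX
      rw [mem_insert, not_or] at hyX
      refine hno y ⟨hyX.2, fun h => hyf (mem_erase.2 ⟨hyX.1, h⟩), hey ▸ heH⟩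
    have hScard : S.card ≤ (q + 1) * k + 1 := by
      have : S ⊆ (insert x X).image (fun y => insert y f) := by
        intro e he
        obtain ⟨y, hy, _, rfl⟩ := hform e he
        exact mem_image_of_mem _ hy
      exact ((card_le_card this).trans card_image_le).trans ((card_insert_le _ _).trans (by omega))
    have he₀S : e₀ ∈ S := mem_filter.2 ⟨he₀, erase_subset _ _⟩
    obtain ⟨g, hg, hgs⟩ := ih (H \ S) (by
        have : (H \ S).card < H.card := card_lt_card (sdiff_ssubset (filter_subset _ H) ⟨e₀, he₀S⟩)
        omega) (fun e he => hcard e (sdiff_subset he)) (by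
        rintro ⟨e, v, h1, h2, h3, h4⟩
        exact hfree ⟨e, v, h1, h2, fun i => sdiff_subset (h3 i), h4⟩)
    have hlab : ∃ l : Finset ℕ → ℕ, Set.InjOn l S ∧ ∀ e ∈ S, l e < (q + 1) * k + 1 := by
      refine ⟨fun e => if h : e ∈ S then (S.equivFin ⟨e, h⟩).val else 0, ?_, ?_⟩
      · intro a ha b hb hab
        have ha' : a ∈ S := ha
        have hb' : b ∈ S := hb
        simp only [ha', hb', dif_pos] at hab
        simpa using S.equivFin.injective (Fin.ext hab)
      · intro e he
        simp only [he, dif_pos]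
        exact lt_of_lt_of_le (Fin.is_lt _) hScard
    obtain ⟨l, hl, hlt⟩ := hlab
    have hsep : ∀ a ∈ S, ∀ b ∈ H, b ∉ S → f ≠ (g b).1 := by
      intro a _ b hb hbS h
      obtain ⟨⟨z, _, hz⟩, _⟩ := hgs b (mem_sdiff.2 ⟨hb, hbS⟩)
      exact hbS (mem_filter.2 ⟨hb, by rw [h, hz]; exact erase_subset _ _⟩)
    refine ⟨fun e => if e ∈ S then (f, l e) else g e, ?_, ?_⟩
    · intro a ha b hb hab
      by_cases h1 : a ∈ S <;> by_cases h2 : b ∈ S <;> simp only [h1, h2, if_true, if_false] at hab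
      · exact hl h1 h2 (Prod.ext_iff.1 hab).2
      · exact absurd (Prod.ext_iff.1 hab).1 (hsep a h1 b hb h2)
      · exact absurd (Prod.ext_iff.1 hab).1.symm (hsep b h2 a ha h1)
      · exact hg (mem_coe.2 (mem_sdiff.2 ⟨ha, h1⟩)) (mem_coe.2 (mem_sdiff.2 ⟨hb, h2⟩)) hab
    · intro e he
      by_cases h1 : e ∈ S
      · simp only [h1, if_true]
        obtain ⟨y, _, hy, hey⟩ := hform e h1
        exact ⟨⟨y, by rw [hey]; simp, by rw [hey, erase_insert hy]⟩, hlt e h1⟩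
      · simp only [h1, if_false]
        exact hgs e (mem_sdiff.2 ⟨he, h1⟩)

/-! ### Palettes and the encoding -/

/-- The number of colours on a set of `q`-subsets of `U` is `O(|U|^(q-1))`: distinct colours
outside `U` extend a loose cycle among the coloured `q`-sets to a loose `(q+1)`-uniform cycle,
so representatives of these colours form a `C_k`-free `q`-graph on `U`. -/
lemma card_palette_le {k q : ℕ} (hk : 3 ≤ k) (hq : 3 ≤ q) (S : Finset (Finset ℕ)) (U : Finset ℕ)
    (hU : ∀ f ∈ S, f ⊆ U ∧ f.card = q) (χ : Finset ℕ → ℕ)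
    (hfree : ¬ HasLooseCycle k ((S.filter (fun f => χ f ≠ 0)).image fun f => insert (χ f) f)) :
    (S.image χ).card ≤ ((q + 1) * k + 1) * U.card ^ (q - 1) + U.card + 1 := by
  set T := S.image χ \ insert 0 U with hT
  have hch : ∀ z ∈ T, ∃ f ∈ S, χ f = z := fun z hz => by
    simpa using mem_image.1 (mem_sdiff.1 hz).1
  choose! φ hφS hφ using hch
  have hφinj : Set.InjOn φ T := fun a ha b hb h => by rw [← hφ a ha, ← hφ b hb, h]
  have hFfree : ¬ HasLooseCycle k (T.image φ) := by
    rintro ⟨e, v, he, hv, heF, hadj, hdis⟩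
    have : Fact (1 < k) := ⟨by omega⟩
    have hsub : ∀ i, e i ⊆ U ∧ χ (e i) ∉ U ∧ χ (e i) ≠ 0 ∧ e i ∈ S := by
      intro i
      obtain ⟨z, hz, hze⟩ := mem_image.1 (heF i)
      have h1 := (mem_sdiff.1 hz).2
      rw [mem_insert, not_or] at h1
      rw [← hze, hφ z hz]
      exact ⟨(hU _ (hφS z hz)).1, h1.2, h1.1, hφS z hz⟩
    have hcol : ∀ i j, i ≠ j → χ (e i) ≠ χ (e j) := by
      intro i j hij h
      obtain ⟨z, hz, hze⟩ := mem_image.1 (heF i)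
      obtain ⟨z', hz', hze'⟩ := mem_image.1 (heF j)
      rw [← hze, ← hze', hφ z hz, hφ z' hz'] at h
      exact hij (he (by rw [← hze, ← hze', h]))
    have hint : ∀ i j, i ≠ j →
        insert (χ (e i)) (e i) ∩ insert (χ (e j)) (e j) = e i ∩ e j := by
      intro i j hij
      ext z
      simp only [mem_inter, mem_insert]
      constructor
      · rintro ⟨h1 | h1, h2 | h2⟩
        · exact absurd (h1.symm.trans h2) (hcol i j hij)
        · exact absurd ((hsub j).1 h2) (h1 ▸ (hsub i).2.1)
        · exact absurd ((hsub i).1 h1) (h2 ▸ (hsub j).2.1)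
        · exact ⟨h1, h2⟩
      · rintro ⟨h1, h2⟩
        exact ⟨Or.inr h1, Or.inr h2⟩
    refine hfree ⟨fun i => insert (χ (e i)) (e i), v, ?_, hv, ?_, ?_, ?_⟩
    · intro i j hij
      by_contra hne
      have h1 : χ (e i) ∈ insert (χ (e j)) (e j) := by
        have : χ (e i) ∈ insert (χ (e i)) (e i) := mem_insert_self _ _
        exact (show insert (χ (e i)) (e i) = insert (χ (e j)) (e j) from hij) ▸ this
      rcases mem_insert.1 h1 with h | h
      · exact hcol i j hne h
      · exact (hsub i).2.1 ((hsub j).1 h)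
    · exact fun i => mem_image.2 ⟨e i, mem_filter.2 ⟨(hsub i).2.2.2, (hsub i).2.2.1⟩, rfl⟩
    · intro i
      have : i ≠ i + 1 := fun h => one_ne_zero (α := ZMod k) (by simp at h)
      exact (hint i (i + 1) this).trans (hadj i)
    · exact fun i j h1 h2 h3 => (hint i j h1.symm).trans (hdis i j h1 h2 h3)
  have hFcard : ∀ f ∈ T.image φ, f ⊆ U ∧ f.card = q := by
    intro f hf
    obtain ⟨z, hz, rfl⟩ := mem_image.1 hf
    exact hU _ (hφS z hz)
  obtain ⟨g, hg, hgs⟩ := exists_assignment hk hq _ (T.image φ) le_rfl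
    (fun f hf => (hFcard f hf).2) hFfree
  have hTcard : T.card ≤ ((q + 1) * k + 1) * U.card ^ (q - 1) := by
    rw [← card_image_of_injOn hφinj]
    calc (T.image φ).card ≤ (U.powersetCard (q - 1) ×ˢ range ((q + 1) * k + 1)).card := by
          refine card_le_card_of_injOn g (fun f hf => ?_) hg
          obtain ⟨⟨x, hx, hfx⟩, h2⟩ := hgs f hf
          rw [mem_coe, mem_product, mem_range, mem_powersetCard, hfx, card_erase_of_mem hx,
            (hFcard f hf).2]
          exact ⟨⟨(erase_subset _ _).trans (hFcard f hf).1, rfl⟩, h2⟩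
      _ ≤ _ := by
          rw [card_product, card_powersetCard, card_range, mul_comm]
          exact Nat.mul_le_mul_left _ (Nat.choose_le_pow _ _)
  have h1 : (S.image χ).card ≤ T.card + (insert 0 U).card := by
    have := le_card_sdiff (insert 0 U) (S.image χ)
    rw [← hT] at this
    omega
  have h2 := card_insert_le 0 U
  omega

/-- A colouring with at most `p` colours on each class of `J` factors through the choice of a
palette of size `p` for each class. -/
lemma exists_factor {Q I : Type*} [Fintype Q] [DecidableEq I] {N p : ℕ} (J : Q → I)
    (χ : Q → Fin (N + 1))
    (h : ∀ i, ((univ.filter fun f => J f = i).image χ).card ≤ p) :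
    ∃ (a : I → Fin p → Fin (N + 1)) (b : Q → Fin p), ∀ f, χ f = a (J f) (b f) := by
  have key : ∀ T : Finset (Fin (N + 1)), T.card ≤ p →
      ∃ a : Fin p → Fin (N + 1), ∀ x ∈ T, ∃ i, a i = x := by
    intro T hT
    refine ⟨fun i => if hi : i.val < T.card then T.equivFin.symm ⟨i, hi⟩ else 0, fun x hx => ?_⟩
    refine ⟨⟨T.equivFin ⟨x, hx⟩, lt_of_lt_of_le (Fin.is_lt _) hT⟩, ?_⟩
    simp
  choose a ha using fun i => key _ (h i)
  have hb : ∀ f, ∃ t, a (J f) t = χ f := fun f =>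
    ha (J f) _ (mem_image.2 ⟨f, by simp, rfl⟩)
  choose b hb using hb
  exact ⟨a, b, fun f => (hb f).symm⟩

/-- The counting bound for an arbitrary block length `b` and palette size `p`. The factor
`(n + 1) ^ (p * (n / b + 1) ^ q)` counts the palettes of all block tuples, and `p ^ (n ^ q)` the
choices of a colour from the palette for each `q`-set. -/
lemma ncard_le {k q : ℕ} (hk : 3 ≤ k) (hq : 3 ≤ q) (n b p : ℕ) (hb : 0 < b)
    (hp : ((q + 1) * k + 1) * (q * b) ^ (q - 1) + q * b + 1 ≤ p) :
    ({H : Finset (Finset ℕ) |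
      H ⊆ (Icc 1 n).powersetCard (q + 1) ∧ ¬ HasLooseCycle k H} : Set _).ncard ≤
      ((n + 1) ^ (p * (n / b + 1) ^ q) * p ^ (n ^ q)) ^ ((q + 2) * k + 1) := by
  classical
  set K := (q + 2) * k + 1 with hK
  let Q := {f // f ∈ (Icc 1 n).powersetCard q}
  let _ : Fintype Q := Finset.fintypeCoeSort _
  have ht : ∀ f : Q, ∃ t : Fin q → ℕ, ∀ x, x ∈ f.1 ↔ ∃ i, t i = x := by
    intro f
    have hc := (mem_powersetCard.1 f.2).2
    refine ⟨fun i => (f.1.equivFinOfCardEq hc).symm i, fun x => ⟨fun hx => ?_, ?_⟩⟩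
    · exact ⟨f.1.equivFinOfCardEq hc ⟨x, hx⟩, by simp⟩
    · rintro ⟨i, rfl⟩
      exact ((f.1.equivFinOfCardEq hc).symm i).2
  choose t ht using ht
  have htn : ∀ f i, t f i ≤ n := fun f i =>
    (mem_Icc.1 ((mem_powersetCard.1 f.2).1 ((ht f _).2 ⟨i, rfl⟩))).2
  let J : Q → Fin q → Fin (n / b + 1) := fun f i =>
    ⟨t f i / b, Nat.lt_succ_of_le (Nat.div_le_div_right (htn f i))⟩
  let dec : (Fin K → ((Fin q → Fin (n / b + 1)) → Fin p → Fin (n + 1)) × (Q → Fin p)) →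
      Finset (Finset ℕ) := fun c => univ.biUnion fun l =>
    (univ.filter fun f : Q => ((c l).1 (J f) ((c l).2 f) : ℕ) ≠ 0).image
      fun f => insert ((c l).1 (J f) ((c l).2 f) : ℕ) f.1
  have hsub : {H : Finset (Finset ℕ) |
      H ⊆ (Icc 1 n).powersetCard (q + 1) ∧ ¬ HasLooseCycle k H} ⊆ Set.range dec := by
    rintro H ⟨hH, hfree⟩
    obtain ⟨g, hg, hgs⟩ := exists_assignment hk (by omega : 3 ≤ q + 1) _ H le_rfl
      (fun e he => (mem_powersetCard.1 (hH he)).2) hfree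
    -- the colour `0` marks the `q`-sets to which no edge with label `l` is assigned
    have hχ : ∀ (l : Fin K) (f : Finset ℕ), ∃ z : Fin (n + 1),
        ((z : ℕ) ≠ 0 → insert (z : ℕ) f ∈ H) ∧
        (∀ e ∈ H, g e = (f, l.1) → (z : ℕ) ≠ 0 ∧ e = insert (z : ℕ) f) := by
      intro l f
      by_cases hex : ∃ e ∈ H, g e = (f, l.1)
      · obtain ⟨e, he, hge⟩ := hex
        obtain ⟨⟨x, hx, hfx⟩, -⟩ := hgs e he
        have hxn := mem_Icc.1 ((mem_powersetCard.1 (hH he)).1 hx)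
        have hef : insert x f = e := by
          rw [hge] at hfx
          rw [show f = e.erase x from hfx, insert_erase hx]
        refine ⟨⟨x, by omega⟩, fun _ => by simpa [hef] using he, fun e' he' hge' => ?_⟩
        refine ⟨by simp only; omega, ?_⟩
        rw [hg he' he (hge'.trans hge.symm)]
        exact hef.symm
      · exact ⟨0, by simp, fun e he hge => absurd ⟨e, he, hge⟩ hex⟩
    choose χ hχ1 hχ2 using hχ
    have hfac : ∀ l, ∃ (a : (Fin q → Fin (n / b + 1)) → Fin p → Fin (n + 1)) (c : Q → Fin p),
        ∀ f : Q, χ l f.1 = a (J f) (c f) := by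
      intro l
      refine exists_factor J (fun f => χ l f.1) fun i => ?_
      set U := univ.biUnion fun s : Fin q => Ico ((i s).1 * b) ((i s).1 * b + b) with hU
      have hUc : U.card ≤ q * b := by
        refine (card_biUnion_le_card_mul _ _ b fun s _ => by simp).trans (by simp)
      set S := (univ.filter fun f : Q => J f = i).image Subtype.val with hS
      have hSU : ∀ f ∈ S, f ⊆ U ∧ f.card = q := by
        intro f hf
        obtain ⟨f, hf', rfl⟩ := mem_image.1 hf
        refine ⟨fun x hx => ?_, (mem_powersetCard.1 f.2).2⟩
        obtain ⟨s, rfl⟩ := (ht f x).1 hx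
        have hi : (i s).1 = t f s / b := by
          rw [← (mem_filter.1 hf').2]
        refine mem_biUnion.2 ⟨s, mem_univ _, mem_Ico.2 ?_⟩
        rw [hi]
        have h1 := Nat.div_add_mod (t f s) b
        have h2 := Nat.mod_lt (t f s) hb
        rw [mul_comm] at h1
        omega
      have hpal := card_palette_le hk hq S U hSU (fun f => (χ l f : ℕ)) (by
        rintro ⟨e, v, h1, h2, h3, h4⟩
        refine hfree ⟨e, v, h1, h2, fun j => ?_, h4⟩
        obtain ⟨f, hf, hfe⟩ := mem_image.1 (h3 j)
        rw [← hfe]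
        exact hχ1 l f (mem_filter.1 hf).2)
      have himg : (S.image fun f => (χ l f : ℕ)) =
          ((univ.filter fun f : Q => J f = i).image fun f => χ l f.1).image Fin.val := by
        rw [hS, image_image, image_image]; rfl
      rw [himg, card_image_of_injective _ Fin.val_injective] at hpal
      refine hpal.trans (le_trans ?_ hp)
      gcongr
    choose a c hac using hfac
    refine ⟨fun l => (a l, c l), ?_⟩
    ext e
    simp only [dec, mem_biUnion, mem_image, mem_filter, mem_univ, true_and, ← hac]
    constructor
    · rintro ⟨l, f, h0, rfl⟩
      exact hχ1 l f.1 h0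
    · intro he
      obtain ⟨⟨x, hx, hfx⟩, hl⟩ := hgs e he
      have hQ : (g e).1 ∈ (Icc 1 n).powersetCard q := by
        have h1 := mem_powersetCard.1 (hH he)
        rw [hfx, mem_powersetCard, card_erase_of_mem hx, h1.2]
        exact ⟨(erase_subset _ _).trans h1.1, rfl⟩
      obtain ⟨h1, h2⟩ := hχ2 ⟨(g e).2, hl⟩ (g e).1 e he rfl
      exact ⟨⟨(g e).2, hl⟩, ⟨(g e).1, hQ⟩, h1, h2.symm⟩
  refine (Set.ncard_le_ncard hsub (Set.finite_range dec)).trans ?_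
  rw [← Set.image_univ]
  refine (Set.ncard_image_le Set.finite_univ).trans ?_
  rw [Set.ncard_univ, Nat.card_eq_fintype_card]
  simp only [Fintype.card_fun, Fintype.card_prod, Fintype.card_fin]
  have hQc : Fintype.card Q ≤ n ^ q := by
    rw [Fintype.card_coe, card_powersetCard, Nat.card_Icc, Nat.add_sub_cancel]
    exact Nat.choose_le_pow _ _
  rw [← pow_mul]
  gcongr
  omega

/-! ### The final estimate -/

/-- A quantity bounded by a monomial in `L ≥ 1` has logarithm at most a constant times
`L ^ α`, for any `α > 0`. -/
lemma logb_le_mul_rpow {α C L p : ℝ} (m : ℕ) (hα : 0 < α) (hC : 1 ≤ C) (hL : 1 ≤ L) (hp : 0 < p)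
    (h : p ≤ C * L ^ m) :
    Real.logb 2 p ≤ (Real.logb 2 C + m / (α * Real.log 2)) * L ^ α := by
  have hlog2 : 0 < Real.log 2 := Real.log_pos (by norm_num)
  have h1 : 1 ≤ L ^ α := Real.one_le_rpow hL hα.le
  have h2 : Real.logb 2 p ≤ Real.logb 2 C + m * Real.logb 2 L := by
    rw [← Real.logb_pow, ← Real.logb_mul (by positivity) (by positivity)]
    exact Real.logb_le_logb_of_le (by norm_num) hp h
  have h3 : Real.logb 2 L ≤ L ^ α / (α * Real.log 2) := by
    rw [Real.logb, ← div_div]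
    gcongr
    exact Real.log_le_rpow_div (by positivity) hα
  have h4 : 0 ≤ Real.logb 2 C := Real.logb_nonneg (by norm_num) hC
  calc Real.logb 2 p ≤ Real.logb 2 C * L ^ α + m * (L ^ α / (α * Real.log 2)) :=
        h2.trans (add_le_add (le_mul_of_one_le_right h4 h1) (by gcongr))
    _ = _ := by ring

/-- For `r > 3` and `k ≥ 3` there is `c > 0` such that for all large `n`, the number of
`C_k`-free `r`-uniform hypergraphs on `[n]` is at most
`2^(c · n^(r-1) · (log₂ n)^((r-3)/(r-2)))`. -/
theorem number_of_Ck_free_r_graphs (r k : ℕ) (hr : 3 < r) (hk : 3 ≤ k) :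
    ∃ c : ℝ, 0 < c ∧ ∃ N : ℕ, ∀ n : ℕ, N ≤ n →
      (({H : Finset (Finset ℕ) |
          H ⊆ (Finset.Icc 1 n).powersetCard r ∧ ¬ HasLooseCycle k H} : Set _).ncard : ℝ)
        ≤ (2 : ℝ) ^ (c * (n : ℝ) ^ (r - 1) *
            (Real.logb 2 n) ^ (((r : ℝ) - 3) / ((r : ℝ) - 2))) := by
  obtain ⟨q, rfl⟩ : ∃ q, r = q + 1 := ⟨r - 1, by omega⟩
  have hq : 3 ≤ q := by omega
  set α : ℝ := (((q + 1 : ℕ) : ℝ) - 3) / (((q + 1 : ℕ) : ℝ) - 2) with hα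
  have hα0 : 0 < α := by
    have : (3 : ℝ) ≤ q := by exact_mod_cast hq
    rw [hα]; push_cast
    exact div_pos (by linarith) (by linarith)
  set K : ℕ := (q + 2) * k + 1 with hK
  set M : ℕ := (K + 2) * q ^ (q - 1) with hM
  have hM1 : 1 ≤ M := Nat.mul_pos (by omega) (by positivity)
  set C : ℝ := Real.logb 2 (M * 2 ^ (q - 1) : ℝ) + (q - 1 : ℕ) / (α * Real.log 2) with hC
  have hMC : (1 : ℝ) ≤ M * 2 ^ (q - 1) :=
    one_le_mul_of_one_le_of_one_le (by exact_mod_cast hM1) (one_le_pow₀ (by norm_num))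
  have hC0 : 0 ≤ C := by
    have : 0 < Real.log 2 := Real.log_pos (by norm_num)
    exact add_nonneg (Real.logb_nonneg (by norm_num) hMC) (by positivity)
  refine ⟨K * (M * 2 ^ q + C), by positivity, 2, fun n hn => ?_⟩
  have hn0 : n ≠ 0 := by omega
  -- blocks of logarithmic length: long enough to make the palettes cheap
  set b : ℕ := Nat.log 2 n + 1 with hb
  set L : ℝ := Real.logb 2 n with hL
  have hL1 : 1 ≤ L := by
    rw [hL, Real.le_logb_iff_rpow_le (by norm_num) (by positivity)]
    simpa using (by exact_mod_cast hn : (2 : ℝ) ≤ n)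
  have hLα : 1 ≤ L ^ α := Real.one_le_rpow hL1 hα0.le
  have hbL : (b : ℝ) ≤ 2 * L := by
    have := Real.natLog_le_logb n 2
    rw [hb]; push_cast at this ⊢
    linarith
  have hbn : b ≤ n := Nat.log_lt_self 2 hn0
  set p : ℕ := M * b ^ (q - 1) with hp
  have hqb : 1 ≤ q * b := Nat.mul_pos (by omega) (by omega)
  have hpbound : ((q + 1) * k + 1) * (q * b) ^ (q - 1) + q * b + 1 ≤ p := by
    have h1 : q * b ≤ (q * b) ^ (q - 1) := Nat.le_self_pow (by omega) _
    have h2 : (q + 1) * k + 1 ≤ K := by rw [hK]; nlinarith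
    have h3 : p = K * (q * b) ^ (q - 1) + (q * b) ^ (q - 1) + (q * b) ^ (q - 1) := by
      rw [hp, hM, mul_pow]; ring
    rw [h3]
    gcongr
    exact hqb.trans h1
  have hpal : (n + 1) ^ (p * (n / b + 1) ^ q) ≤ 2 ^ (M * 2 ^ q * n ^ q) := by
    have h1 : n + 1 ≤ 2 ^ b := Nat.lt_pow_succ_log_self (by norm_num) n
    have h2 : b * (n / b + 1) ≤ 2 * n := by
      have := Nat.mul_div_le n b
      rw [mul_add, mul_one]; omega
    have h3 : b * (p * (n / b + 1) ^ q) = M * (b * (n / b + 1)) ^ q := by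
      obtain ⟨m, rfl⟩ : ∃ m, q = m + 1 := ⟨q - 1, by omega⟩
      rw [hp, mul_pow, Nat.add_sub_cancel]; ring
    calc (n + 1) ^ (p * (n / b + 1) ^ q) ≤ (2 ^ b) ^ (p * (n / b + 1) ^ q) :=
          Nat.pow_le_pow_left h1 _
      _ = 2 ^ (M * (b * (n / b + 1)) ^ q) := by rw [← pow_mul, h3]
      _ ≤ 2 ^ (M * 2 ^ q * n ^ q) := by
          refine Nat.pow_le_pow_right (by norm_num) ?_
          calc M * (b * (n / b + 1)) ^ q ≤ M * (2 * n) ^ q := by gcongr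
            _ = M * 2 ^ q * n ^ q := by rw [mul_pow, ← mul_assoc]
  have hp0 : (0 : ℝ) < p := by
    have : 0 < p := by omega
    exact_mod_cast this
  have hplog : Real.logb 2 p ≤ C * L ^ α := by
    refine logb_le_mul_rpow (q - 1) hα0 hMC hL1 hp0 ?_
    calc (p : ℝ) = M * (b : ℝ) ^ (q - 1) := by rw [hp, Nat.cast_mul, Nat.cast_pow]
      _ ≤ M * (2 * L) ^ (q - 1) := by gcongr
      _ = _ := by rw [mul_pow, ← mul_assoc]
  have hcol : (p : ℝ) ^ (n ^ q) ≤ (2 : ℝ) ^ (C * L ^ α * (n : ℝ) ^ q) := by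
    have hcast : (n : ℝ) ^ q = ((n ^ q : ℕ) : ℝ) := (Nat.cast_pow n q).symm
    rw [Real.rpow_mul (by norm_num), hcast, Real.rpow_natCast]
    refine pow_le_pow_left₀ hp0.le ?_ _
    exact (Real.logb_le_iff_le_rpow (by norm_num) hp0).1 hplog
  have hcount := ncard_le hk hq n b p (by omega) hpbound
  calc _ ≤ ((((n + 1) ^ (p * (n / b + 1) ^ q) * p ^ (n ^ q)) ^ K : ℕ) : ℝ) := by
        exact_mod_cast hcount
    _ ≤ ((2 : ℝ) ^ ((M * 2 ^ q * n ^ q : ℕ) : ℝ) * 2 ^ (C * L ^ α * (n : ℝ) ^ q)) ^ K := by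
        rw [Real.rpow_natCast]
        push_cast
        gcongr
        · exact_mod_cast hpal
    _ = (2 : ℝ) ^ (K * (M * 2 ^ q * (n : ℝ) ^ q + C * L ^ α * (n : ℝ) ^ q)) := by
        rw [← Real.rpow_add (by norm_num), ← Real.rpow_natCast, ← Real.rpow_mul (by norm_num)]
        push_cast
        ring_nf
    _ ≤ _ := by
        rw [Nat.add_sub_cancel]
        refine Real.rpow_le_rpow_of_exponent_le (by norm_num) ?_
        have : (M * 2 ^ q * (n : ℝ) ^ q) ≤ (M * 2 ^ q * (n : ℝ) ^ q) * L ^ α :=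
          le_mul_of_one_le_right (by positivity) hLα
        calc _ ≤ (K : ℝ) * ((M * 2 ^ q * (n : ℝ) ^ q) * L ^ α + C * L ^ α * (n : ℝ) ^ q) := by
              gcongr
          _ = _ := by ring
end

section
/- For every even integer k ≥ 4 there exist constants c₂ ≥ c₁ > 0 such that for all sufficiently large n, the number of C_k-free 3-uniform hypergraphs with vertex set [n] is at least 2^{c₁·n²} and at most 2^{c₂·n²}. -/
namespace LooseCycle

open Finset

/-! ### Loose cycles and greedy choices -/

/-- Builds a loose `k`-cycle from a cyclic sequence of core vertices `v 0, …, v (k - 1)` and one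
further private vertex `c i` for each edge `{v i, v (i + 1), c i}`. -/
lemma hasLooseCycle_of (k : ℕ) (hk : 4 ≤ k) (H : Finset (Finset ℕ)) (v c : ℕ → ℕ)
    (hv : ∀ i < k, ∀ j < k, v i = v j → i = j) (hc : ∀ i < k, ∀ j < k, c i = c j → i = j)
    (hvc : ∀ i < k, ∀ j < k, c i ≠ v j)
    (hH : ∀ i < k, ({v i, v ((i + 1) % k), c i} : Finset ℕ) ∈ H) : HasLooseCycle k H := by
  have : NeZero k := ⟨by omega⟩
  have : Fact (1 < k) := ⟨by omega⟩
  obtain ⟨V, hV⟩ : ∃ V : ZMod k → ℕ, ∀ i, V i = v i.val := ⟨_, fun _ => rfl⟩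
  obtain ⟨C, hC⟩ : ∃ C : ZMod k → ℕ, ∀ i, C i = c i.val := ⟨_, fun _ => rfl⟩
  have hVi : ∀ i j, V i = V j ↔ i = j := fun i j => ⟨fun h => ZMod.val_injective k
    (hv _ (ZMod.val_lt i) _ (ZMod.val_lt j) (by rw [← hV, ← hV, h])), fun h => by rw [h]⟩
  have hCi : ∀ i j, C i = C j ↔ i = j := fun i j => ⟨fun h => ZMod.val_injective k
    (hc _ (ZMod.val_lt i) _ (ZMod.val_lt j) (by rw [← hC, ← hC, h])), fun h => by rw [h]⟩
  have hCV : ∀ i j, C i ≠ V j := fun i j h => hvc _ (ZMod.val_lt i) _ (ZMod.val_lt j)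
    (by rw [← hC, ← hV, h])
  have h1 : (1 : ZMod k) ≠ 0 := one_ne_zero
  have h2 : (2 : ZMod k) ≠ 0 := by
    intro h
    have := (ZMod.natCast_eq_zero_iff 2 k).1 (by exact_mod_cast h)
    have := Nat.le_of_dvd (by norm_num) this
    omega
  refine ⟨fun i => {V i, V (i + 1), C i}, fun i => V (i + 1), ?_, ?_, ?_, ?_, ?_⟩
  · intro i j h
    have h' : ({V i, V (i + 1), C i} : Finset ℕ) = {V j, V (j + 1), C j} := h
    have h3 : C i ∈ ({V j, V (j + 1), C j} : Finset ℕ) := by rw [← h']; simp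
    simpa [hCV, hCi] using h3
  · intro i j h
    simpa [hVi] using h
  · intro i
    have := hH _ (ZMod.val_lt i)
    simp only [hV, hC, ZMod.val_add, ZMod.val_one]
    exact this
  · intro i
    ext w
    simp only [mem_inter, mem_insert, mem_singleton]
    constructor
    · rintro ⟨rfl | rfl | rfl, h | h | h⟩
      · rw [hVi] at h; simp at h
      · rw [hVi, add_assoc] at h; norm_num at h; exact absurd h h2
      · exact absurd h.symm (hCV _ _)
      · rfl
      · rfl
      · rfl
      · exact absurd h (hCV _ _)
      · exact absurd h (hCV _ _)
      · rw [hCi] at h; simp at h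
    · rintro rfl
      simp
  · intro i j hij hij1 hji
    ext w
    simp only [mem_inter, mem_insert, mem_singleton, notMem_empty, iff_false]
    rintro ⟨rfl | rfl | rfl, h | h | h⟩
    · rw [hVi] at h; exact hij h.symm
    · rw [hVi] at h; exact hji h
    · exact hCV _ _ h.symm
    · rw [hVi] at h; exact hij1 h.symm
    · rw [hVi] at h; exact hij (by simpa using h.symm)
    · exact hCV _ _ h.symm
    · exact hCV _ _ h
    · exact hCV _ _ h
    · rw [hCi] at h; exact hij h.symm

/-- Greedy choice with averaging: if, for every column `y ∈ C` still good for the current row set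
`A`, at least a `1 / q` fraction of `X` extends `A` while keeping `y` good, then some `j`-element
row set keeps at least a `q ^ (-j)` fraction of the columns good. -/
lemma greedy {α β : Type*} [DecidableEq α] (X : Finset α) (C : Finset β)
    (good : Finset α → β → Prop) [∀ A y, Decidable (good A y)] (q j : ℕ)
    (hj : j ≤ #X) (h0 : ∀ y ∈ C, good ∅ y)
    (hstep : ∀ A ⊆ X, #A < j → ∀ y ∈ C, good A y →
      #X ≤ q * #{x ∈ X | x ∉ A ∧ good (insert x A) y}) :
    ∃ A ⊆ X, #A = j ∧ #C ≤ q ^ j * #{y ∈ C | good A y} := by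
  induction j with
  | zero =>
    refine ⟨∅, empty_subset _, rfl, ?_⟩
    rw [filter_true_of_mem h0]; simp
  | succ j ih =>
    obtain ⟨A, hAX, hA, hC⟩ := ih (by omega) (fun A h1 h2 => hstep A h1 (by omega))
    set C' := {y ∈ C | good A y} with hC'
    have hne : (X \ A).Nonempty := by
      rw [← card_pos, card_sdiff_of_subset hAX]; omega
    have key : ∑ x ∈ X \ A, #C' ≤ ∑ x ∈ X \ A, q * #{y ∈ C' | good (insert x A) y} := by
      rw [sum_const, smul_eq_mul, ← mul_sum]
      have hsw : ∑ x ∈ X \ A, #{y ∈ C' | good (insert x A) y}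
          = ∑ y ∈ C', #{x ∈ X | x ∉ A ∧ good (insert x A) y} := by
        simp only [card_filter]
        rw [sum_comm]
        refine sum_congr rfl fun y _ => ?_
        rw [← sum_filter, ← sum_filter, ← filter_filter, sdiff_eq_filter]
      rw [hsw, mul_sum]
      calc #(X \ A) * #C' ≤ #X * #C' := Nat.mul_le_mul_right _ (card_le_card sdiff_subset)
        _ = ∑ y ∈ C', #X := by rw [sum_const, smul_eq_mul, mul_comm]
        _ ≤ _ := sum_le_sum fun y hy => by
          rw [hC', mem_filter] at hy
          exact hstep A hAX (by omega) y hy.1 hy.2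
    obtain ⟨x, hx, hxC⟩ := exists_le_of_sum_le hne key
    rw [mem_sdiff] at hx
    refine ⟨insert x A, insert_subset hx.1 hAX, by rw [card_insert_of_notMem hx.2, hA], ?_⟩
    calc #C ≤ q ^ j * #C' := hC
      _ ≤ q ^ j * (q * #{y ∈ C' | good (insert x A) y}) := Nat.mul_le_mul_left _ hxC
      _ = q ^ (j + 1) * #{y ∈ C' | good (insert x A) y} := by ring
      _ ≤ _ := Nat.mul_le_mul_left _ (card_le_card
          (filter_subset_filter _ (filter_subset _ _)))

/-! ### Edges versus shadow -/

lemma hasLooseCycle_mono {k : ℕ} {H H' : Finset (Finset ℕ)} (h : H ⊆ H')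
    (hc : HasLooseCycle k H) : HasLooseCycle k H' := by
  obtain ⟨e, v, h1, h2, h3, h4, h5⟩ := hc
  exact ⟨e, v, h1, h2, fun i => h (h3 i), h4, h5⟩

/-- Membership of `{x, y, z}` in a 3-uniform system forces the three vertices to be distinct. -/
lemma distinct_of_mem {V : Finset ℕ} {H : Finset (Finset ℕ)} (hH : H ⊆ V.powersetCard 3)
    {x y z : ℕ} (h : ({x, y, z} : Finset ℕ) ∈ H) :
    x ∈ V ∧ y ∈ V ∧ z ∈ V ∧ x ≠ y ∧ x ≠ z ∧ y ≠ z := by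
  have h1 := mem_powersetCard.1 (hH h)
  refine ⟨h1.1 (by simp), h1.1 (by simp), h1.1 (by simp), ?_⟩
  have h2 := h1.2
  refine ⟨?_, ?_, ?_⟩
  · rintro rfl
    have : #({x, x, z} : Finset ℕ) ≤ 2 := by rw [insert_idem]; exact card_le_two
    omega
  · rintro rfl
    have : #({x, y, x} : Finset ℕ) ≤ 2 := by
      rw [insert_eq_of_mem (by simp)]; exact card_le_two
    omega
  · rintro rfl
    have : #({x, y, y} : Finset ℕ) ≤ 2 := by
      rw [insert_eq_of_mem (a := y) (by simp)]; exact card_le_two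
    omega

/-- If every shadow pair has codegree at least `2 * k`, the shadow contains a cycle on `j` distinct
vertices for every `2 ≤ j ≤ k`: replace the closing pair of a `j`-cycle by the path through a new
vertex completing that pair to an edge. -/
lemma exists_shadow_cycle (k : ℕ) (V : Finset ℕ) (H : Finset (Finset ℕ))
    (hH : H ⊆ V.powersetCard 3) (hne : H.Nonempty)
    (hfull : ∀ x y, (∃ z, ({x, y, z} : Finset ℕ) ∈ H) →
      2 * k ≤ #{z ∈ V | ({x, y, z} : Finset ℕ) ∈ H}) (j : ℕ) (hj : 2 ≤ j) (hjk : j ≤ k) :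
    ∃ v : ℕ → ℕ, (∀ i < j, ∀ i' < j, v i = v i' → i = i') ∧
      ∀ i < j, ∃ z, ({v i, v ((i + 1) % j), z} : Finset ℕ) ∈ H := by
  induction j, hj using Nat.le_induction with
  | base =>
    obtain ⟨e, he⟩ := hne
    obtain ⟨x, y, z, hxy, hxz, hyz, rfl⟩ := card_eq_three.1 (mem_powersetCard.1 (hH he)).2
    refine ⟨fun i => if i = 0 then x else y, ?_, ?_⟩
    · intro i hi i' hi' h
      interval_cases i <;> interval_cases i' <;> simp_all
    · intro i hi
      refine ⟨z, ?_⟩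
      interval_cases i
      · simpa using he
      · simpa [insert_comm] using he
  | succ j hj ih =>
    obtain ⟨v, hv, hP⟩ := ih (by omega)
    have hlast := hfull _ _ (hP (j - 1) (by omega))
    rw [show j - 1 + 1 = j by omega, Nat.mod_self] at hlast
    obtain ⟨z, hz, hzv⟩ : ∃ z ∈ {z ∈ V | ({v (j - 1), v 0, z} : Finset ℕ) ∈ H},
        z ∉ (range j).image v := by
      apply exists_mem_notMem_of_card_lt_card
      have := card_image_le (s := range j) (f := v)
      rw [card_range] at this
      omega
    have hzH := (mem_filter.1 hz).2
    have hzv' : ∀ i < j, v i ≠ z := fun i hi h =>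
      hzv (mem_image.2 ⟨i, mem_range.2 hi, h⟩)
    refine ⟨fun i => if i < j then v i else z, ?_, ?_⟩
    · intro i hi i' hi' h
      by_cases h1 : i < j <;> by_cases h2 : i' < j
      · simp only [h1, h2, if_true] at h; exact hv _ h1 _ h2 h
      · simp only [h1, h2, if_true, if_false] at h; exact absurd h (hzv' _ h1)
      · simp only [h1, h2, if_true, if_false] at h; exact absurd h.symm (hzv' _ h2)
      · omega
    · intro i hi
      rcases Nat.lt_trichotomy (i + 1) j with h1 | h1 | h1
      · have := hP i (by omega)
        rw [Nat.mod_eq_of_lt h1] at this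
        rw [Nat.mod_eq_of_lt (by omega)]
        simpa [h1, show i < j by omega] using this
      · rw [Nat.mod_eq_of_lt (by omega)]
        refine ⟨v 0, ?_⟩
        simp only [h1, show i < j by omega, if_true, lt_irrefl, if_false]
        rw [show i = j - 1 by omega]
        rw [show ({v (j - 1), z, v 0} : Finset ℕ) = {v (j - 1), v 0, z} by
          ext; simp; tauto]
        exact hzH
      · obtain rfl : i = j := by omega
        rw [Nat.mod_self]
        refine ⟨v (i - 1), ?_⟩
        simp only [lt_irrefl, if_false, show 0 < i by omega, if_true]
        rw [show ({z, v 0, v (i - 1)} : Finset ℕ) = {v (i - 1), v 0, z} by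
          ext; simp; tauto]
        exact hzH

/-- A nonempty system whose shadow pairs all have codegree at least `2 * k` has a loose `k`-cycle:
a shadow `k`-cycle expands, since each of its `k` pairs has at least `k` candidates for the third
vertex off the cycle and Hall's theorem picks distinct ones. -/
lemma hasLooseCycle_of_full (k : ℕ) (hk : 4 ≤ k) (V : Finset ℕ) (H : Finset (Finset ℕ))
    (hH : H ⊆ V.powersetCard 3) (hne : H.Nonempty)
    (hfull : ∀ x y, (∃ z, ({x, y, z} : Finset ℕ) ∈ H) →
      2 * k ≤ #{z ∈ V | ({x, y, z} : Finset ℕ) ∈ H}) : HasLooseCycle k H := by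
  obtain ⟨v, hv, hP⟩ := exists_shadow_cycle k V H hH hne hfull k (by omega) le_rfl
  let t : Fin k → Finset ℕ := fun i =>
    {z ∈ V | ({v i, v ((i + 1) % k), z} : Finset ℕ) ∈ H} \ (range k).image v
  have ht : ∀ i, k ≤ #(t i) := by
    intro i
    have h1 := hfull _ _ (hP i i.2)
    have h2 := le_card_sdiff ((range k).image v)
      {z ∈ V | ({v i, v ((i + 1) % k), z} : Finset ℕ) ∈ H}
    have h3 := card_image_le (s := range k) (f := v)
    rw [card_range] at h3
    have : #(t i) = #({z ∈ V | ({v i, v ((i + 1) % k), z} : Finset ℕ) ∈ H} \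
      (range k).image v) := rfl
    omega
  obtain ⟨f, hf, hft⟩ := (all_card_le_biUnion_card_iff_exists_injective t).1 (by
    intro s
    rcases s.eq_empty_or_nonempty with rfl | ⟨i, hi⟩
    · simp
    · calc #s ≤ k := by simpa using card_le_univ s
        _ ≤ #(t i) := ht i
        _ ≤ _ := card_le_card (subset_biUnion_of_mem t hi))
  refine hasLooseCycle_of k hk H v (fun i => if h : i < k then f ⟨i, h⟩ else 0) hv ?_ ?_ ?_
  · intro i hi j hj h
    simp only [hi, hj, dif_pos] at h
    simpa using hf h
  · intro i hi j hj h
    simp only [hi, dif_pos] at h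
    have := (mem_sdiff.1 (hft ⟨i, hi⟩)).2
    exact this (mem_image.2 ⟨j, mem_range.2 hj, h.symm⟩)
  · intro i hi
    simp only [hi, dif_pos]
    exact (mem_filter.1 (mem_sdiff.1 (hft ⟨i, hi⟩)).1).2

/-- Ordered shadow: the ordered pairs of `V` lying in some edge of the triple system `H`. -/
def shadow (V : Finset ℕ) (H : Finset (Finset ℕ)) : Finset (ℕ × ℕ) :=
  {p ∈ V ×ˢ V | ∃ z ∈ V, ({p.1, p.2, z} : Finset ℕ) ∈ H}

/-- In a `C_k`-free system the number of edges is at most `2 * k` times the size of the shadow: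
delete the fewer than `2 * k` edges through a pair of small codegree, which removes that pair from
the shadow, and repeat. -/
lemma card_le_shadow (k : ℕ) (hk : 4 ≤ k) (V : Finset ℕ) (H : Finset (Finset ℕ))
    (hH : H ⊆ V.powersetCard 3) (hc : ¬ HasLooseCycle k H) : #H ≤ 2 * k * #(shadow V H) := by
  induction h : #H using Nat.strong_induction_on generalizing H with
  | _ N ih =>
  subst h
  rcases H.eq_empty_or_nonempty with rfl | hne
  · simp
  obtain ⟨x, y, ⟨z, hz⟩, hxy⟩ : ∃ x y, (∃ z, ({x, y, z} : Finset ℕ) ∈ H) ∧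
      #{z ∈ V | ({x, y, z} : Finset ℕ) ∈ H} < 2 * k := by
    by_contra! hcon
    exact hc (hasLooseCycle_of_full k hk V H hH hne hcon)
  set H' := {e ∈ H | ¬ (x ∈ e ∧ y ∈ e)} with hH'
  have hsub : H' ⊆ H := filter_subset _ _
  have hlt : #H' < #H := by
    refine card_lt_card (Finset.ssubset_iff_subset_ne.2 ⟨hsub, fun h => ?_⟩)
    rw [← h, hH', mem_filter] at hz
    simp at hz
  have h1 := ih _ hlt H' (hsub.trans hH) (fun h => hc (hasLooseCycle_mono hsub h)) rfl
  obtain ⟨hxV, hyV, hzV, hxy', -⟩ := distinct_of_mem hH hz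
  have h2 : #{e ∈ H | x ∈ e ∧ y ∈ e} ≤ #{z ∈ V | ({x, y, z} : Finset ℕ) ∈ H} := by
    refine le_trans (card_le_card ?_) (card_image_le (f := fun z => ({x, y, z} : Finset ℕ)))
    intro e he
    obtain ⟨heH, hx, hy⟩ := mem_filter.1 he
    obtain ⟨heV, he3⟩ := mem_powersetCard.1 (hH heH)
    have hcard : #(e \ {x, y}) = 1 := by
      rw [card_sdiff_of_subset (by simp [insert_subset_iff, hx, hy]), he3, card_pair hxy']
    obtain ⟨w, hw⟩ := card_eq_one.1 hcard
    have hew : ({x, y, w} : Finset ℕ) = e := by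
      have := sdiff_union_of_subset (show ({x, y} : Finset ℕ) ⊆ e by
        simp [insert_subset_iff, hx, hy])
      rw [← this, hw]
      ext; simp; tauto
    refine mem_image.2 ⟨w, mem_filter.2 ⟨heV ?_, by rw [hew]; exact heH⟩, hew⟩
    rw [← hew]; simp
  have h3 : #(shadow V H') + 1 ≤ #(shadow V H) := by
    refine card_lt_card (Finset.ssubset_iff_subset_ne.2 ⟨?_, fun h => ?_⟩)
    · intro p hp
      obtain ⟨hp1, w, hw, hp2⟩ := mem_filter.1 hp
      exact mem_filter.2 ⟨hp1, w, hw, hsub hp2⟩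
    · have : (x, y) ∈ shadow V H :=
        mem_filter.2 ⟨mem_product.2 ⟨hxV, hyV⟩, z, hzV, hz⟩
      rw [← h] at this
      obtain ⟨-, w, -, hw⟩ := mem_filter.1 this
      rw [hH', mem_filter] at hw
      simp at hw
  have h4 := card_filter_add_card_filter_not (s := H) (fun e => x ∈ e ∧ y ∈ e)
  have h5 : 2 * k * (#(shadow V H') + 1) ≤ 2 * k * #(shadow V H) := Nat.mul_le_mul_left _ h3
  rw [mul_add, mul_one] at h5
  have h6 : #H' = #{e ∈ H | ¬ (x ∈ e ∧ y ∈ e)} := rfl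
  omega

/-! ### Rainbow bicliques -/

lemma exists_enum (m : ℕ) (A : Finset ℕ) (hA : #A = m) :
    ∃ x : ℕ → ℕ, (∀ i < m, x i ∈ A) ∧ ∀ i < m, ∀ j < m, x i = x j → i = j := by
  refine ⟨fun i => if h : i < m then A.orderEmbOfFin hA ⟨i, h⟩ else 0, ?_, ?_⟩
  · intro i hi
    simp only [hi, dif_pos]
    exact orderEmbOfFin_mem _ _ _
  · intro i hi j hj h
    simp only [hi, hj, dif_pos] at h
    simpa using (A.orderEmbOfFin hA).injective h

/-- A colouring `χ` is strongly rainbow on `A × B`: distinct pairs get distinct colours, and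
no colour is an element of `A` or `B`. -/
def Rainbow (χ : ℕ → ℕ → ℕ) (A B : Finset ℕ) : Prop :=
  (∀ x ∈ A, ∀ x' ∈ A, ∀ y ∈ B, ∀ y' ∈ B, χ x y = χ x' y' → x = x' ∧ y = y') ∧
  (∀ x ∈ A, ∀ x' ∈ A, ∀ y ∈ B, χ x y ≠ x') ∧ (∀ x ∈ A, ∀ y ∈ B, ∀ y' ∈ B, χ x y ≠ y')

/-- The Hamilton cycle of a strongly rainbow `K_{m,m}` expands to a loose `2 * m`-cycle, the
colours serving as third vertices. -/
lemma hasLooseCycle_of_rainbow (m : ℕ) (hm : 2 ≤ m) (A B : Finset ℕ) (hA : #A = m)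
    (hB : #B = m) (hAB : Disjoint A B) (χ : ℕ → ℕ → ℕ) (hr : Rainbow χ A B)
    (H : Finset (Finset ℕ)) (hH : ∀ x ∈ A, ∀ y ∈ B, ({x, y, χ x y} : Finset ℕ) ∈ H) :
    HasLooseCycle (2 * m) H := by
  obtain ⟨x, hxA, hx⟩ := exists_enum m A hA
  obtain ⟨y, hyB, hy⟩ := exists_enum m B hB
  obtain ⟨hr1, hr2, hr3⟩ := hr
  have hxy : ∀ i < m, ∀ j < m, x i ≠ y j := fun i hi j hj h =>
    (disjoint_left.1 hAB (hxA i hi)) (h ▸ hyB j hj)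
  obtain ⟨p, hp⟩ : ∃ p : ℕ → ℕ, ∀ i, p i = if i % 2 = 0 then i / 2 else (i / 2 + 1) % m :=
    ⟨_, fun _ => rfl⟩
  have hpm : ∀ i < 2 * m, p i < m := by
    intro i hi
    rw [hp]
    split_ifs
    · omega
    · exact Nat.mod_lt _ (by omega)
  have hsucc : ∀ a < m, (a + 1) % m ≠ a := by
    intro a ha h
    rcases Nat.lt_or_ge (a + 1) m with h1 | h1
    · rw [Nat.mod_eq_of_lt h1] at h; omega
    · rw [show a + 1 = m by omega, Nat.mod_self] at h; omega
  refine hasLooseCycle_of (2 * m) (by omega) H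
    (fun i => if i % 2 = 0 then x (i / 2) else y (i / 2))
    (fun i => χ (x (p i)) (y (i / 2))) ?_ ?_ ?_ ?_
  · intro i hi j hj h
    by_cases h1 : i % 2 = 0 <;> by_cases h2 : j % 2 = 0 <;>
      simp only [h1, h2, if_true, if_false] at h
    · have := hx _ (by omega) _ (by omega) h; omega
    · exact absurd h (hxy _ (by omega) _ (by omega))
    · exact absurd h.symm (hxy _ (by omega) _ (by omega))
    · have := hy _ (by omega) _ (by omega) h; omega
  · intro i hi j hj h
    obtain ⟨h1, h2⟩ := hr1 _ (hxA _ (hpm i hi)) _ (hxA _ (hpm j hj)) _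
      (hyB (i / 2) (by omega)) _ (hyB (j / 2) (by omega)) h
    have h3 := hx _ (hpm i hi) _ (hpm j hj) h1
    have h4 := hy _ (by omega) _ (by omega) h2
    rw [hp, hp, h4] at h3
    have h5 := hsucc (j / 2) (by omega)
    split_ifs at h3 <;> omega
  · intro i hi j hj h
    by_cases h2 : j % 2 = 0 <;> simp only [h2, if_true, if_false] at h
    · exact hr2 _ (hxA _ (hpm i hi)) _ (hxA _ (by omega)) _ (hyB _ (by omega)) h
    · exact hr3 _ (hxA _ (hpm i hi)) _ (hyB _ (by omega)) _ (hyB _ (by omega)) h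
  · intro i hi
    have hmem := hH _ (hxA _ (hpm i hi)) _ (hyB (i / 2) (by omega))
    by_cases h1 : i % 2 = 0
    · have h2 : (i + 1) % (2 * m) = i + 1 := Nat.mod_eq_of_lt (by omega)
      have h3 : (i + 1) / 2 = i / 2 := by omega
      have h4 : ¬ (i + 1) % 2 = 0 := by omega
      have h5 : p i = i / 2 := by rw [hp, if_pos h1]
      simp only [h1, h2, h3, h4, if_true, if_false]
      rw [h5] at hmem ⊢
      exact hmem
    · have h2 : (i + 1) % (2 * m) = 2 * ((i / 2 + 1) % m) := by
        rw [← Nat.mul_mod_mul_left]; congr 1; omega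
      have h3 : (2 * ((i / 2 + 1) % m)) / 2 = (i / 2 + 1) % m := by omega
      have h4 : (2 * ((i / 2 + 1) % m)) % 2 = 0 := by omega
      have h5 : p i = (i / 2 + 1) % m := by rw [hp, if_neg h1]
      simp only [h1, h2, h3, h4, if_true, if_false]
      rw [h5] at hmem ⊢
      rw [insert_comm]
      exact hmem

/-- If every column of `C` is related to sufficiently many rows, some `l` rows have a large common
neighbourhood in `C`. -/
lemma exists_biclique {α β : Type*} [DecidableEq α] (X : Finset α) (C : Finset β)
    (R : α → β → Prop) [∀ x y, Decidable (R x y)]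
    (q l : ℕ) (hl : l ≤ #X) (hq : ∀ y ∈ C, #X ≤ q * (#{x ∈ X | R x y} - l)) :
    ∃ S ⊆ X, #S = l ∧ #C ≤ q ^ l * #{y ∈ C | ∀ x ∈ S, R x y} := by
  refine greedy X C (fun S y => ∀ x ∈ S, R x y) q l hl (by simp) ?_
  intro A hA hAl y hy hgood
  refine (hq y hy).trans (Nat.mul_le_mul_left _ ?_)
  calc #{x ∈ X | R x y} - l ≤ #{x ∈ X | R x y} - #A := by omega
    _ ≤ #({x ∈ X | R x y} \ A) := le_card_sdiff _ _
    _ ≤ _ := by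
      refine card_le_card fun x hx => ?_
      simp only [mem_sdiff, mem_filter] at hx
      refine mem_filter.2 ⟨hx.1.1, hx.2, ?_⟩
      intro x' hx'
      rcases mem_insert.1 hx' with rfl | h
      · exact hx.1.2
      · exact hgood _ h

/-- A bipartite relation of density at least `1 / q` has at least `#Y / (2 * q)` columns of degree
at least `D`, provided `D ≤ #X / (2 * q)`. -/
lemma many_large_degrees {α β : Type*} (X : Finset α) (Y : Finset β)
    (R : α → β → Prop) [∀ x y, Decidable (R x y)]
    (q D : ℕ) (hX : 0 < #X) (hD : 2 * q * D ≤ #X)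
    (h : #X * #Y ≤ q * ∑ y ∈ Y, #{x ∈ X | R x y}) :
    #Y ≤ 2 * q * #{y ∈ Y | D ≤ #{x ∈ X | R x y}} := by
  set Z := {y ∈ Y | D ≤ #{x ∈ X | R x y}} with hZ
  have h1 : ∑ y ∈ Y, #{x ∈ X | R x y} ≤ #Z * #X + #Y * D := by
    rw [← sum_filter_add_sum_filter_not Y (fun y => D ≤ #{x ∈ X | R x y})]
    refine add_le_add ?_ ?_
    · rw [← smul_eq_mul]
      exact sum_le_card_nsmul _ _ _ fun y _ => card_le_card (filter_subset _ _)
    · refine le_trans (sum_le_card_nsmul _ _ D fun y hy => ?_) ?_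
      · have := (mem_filter.1 hy).2; omega
      · rw [smul_eq_mul]
        exact Nat.mul_le_mul_right _ (card_le_card (filter_subset _ _))
  have h2 : #X * #Y ≤ #X * (2 * q * #Z) := by
    have h3 := Nat.mul_le_mul_left q h1
    have h4 := Nat.mul_le_mul_right #Y hD
    nlinarith
  exact Nat.le_of_mul_le_mul_left h2 hX

/-- If no colour is popular in a row or in a column, a strongly rainbow `K_{m,m}` exists. Rows are
chosen greedily so that many columns see `m` distinct colours outside the row set; columns are then
chosen among these one at a time, avoiding the few that repeat a colour or collide with a vertex. -/
lemma exists_rainbow (m D : ℕ) (hm : 1 ≤ m) (hD : 1 ≤ D) (χ : ℕ → ℕ → ℕ) (U Y : Finset ℕ)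
    (hx : ∀ x ∈ U, ∀ y ∈ Y, χ x y ≠ x) (hy : ∀ x ∈ U, ∀ y ∈ Y, χ x y ≠ y)
    (hcol : ∀ y ∈ Y, ∀ c, #{x ∈ U | χ x y = c} ≤ D)
    (hrow : ∀ x ∈ U, ∀ c, (4 * m ^ 3 * 2 ^ m) * #{y ∈ Y | χ x y = c} ≤ #Y)
    (hU : 6 * m * D ≤ #U) (hY : 2 * m ^ 2 * 2 ^ m < #Y) :
    ∃ A ⊆ U, ∃ B ⊆ Y, #A = m ∧ #B = m ∧ Rainbow χ A B := by
  obtain ⟨good, good_iff⟩ : ∃ good : Finset ℕ → ℕ → Prop, ∀ A y, good A y ↔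
    (∀ x ∈ A, ∀ x' ∈ A, χ x y = χ x' y → x = x') ∧ ∀ x ∈ A, ∀ x' ∈ A, χ x y ≠ x' :=
    ⟨_, fun _ _ => Iff.rfl⟩
  have : ∀ A y, Decidable (good A y) := fun _ _ => Classical.propDecidable _
  obtain ⟨A, hAU, hA, hC⟩ := greedy U Y good 2 m (by nlinarith) (by simp [good_iff]) (by
      intro A hAU hA y hyY hg
      obtain ⟨hg1, hg2⟩ := (good_iff A y).1 hg
      set bad := A.biUnion fun x' => {x ∈ U | χ x y = χ x' y} ∪ {x ∈ U | χ x y = x'} ∪ {χ x' y}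
        with hbad
      have hbc : #bad ≤ #A * (3 * D) := by
        refine card_biUnion_le_card_mul _ _ _ fun x' _ => ?_
        refine (card_union_le _ _).trans ?_
        have h1 := card_union_le {x ∈ U | χ x y = χ x' y} {x ∈ U | χ x y = x'}
        have h2 := hcol y hyY (χ x' y)
        have h3 := hcol y hyY x'
        rw [card_singleton]
        omega
      have hbc2 : 2 * #bad ≤ #U := by nlinarith
      have h1 := le_card_sdiff bad U
      have h2 : #(U \ bad) ≤ #{x ∈ U | x ∉ A ∧ good (insert x A) y} := by
        refine card_le_card fun x hxb => ?_
        simp only [hbad, mem_sdiff, mem_biUnion, mem_union, mem_filter, mem_singleton,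
          not_exists, not_and, not_or] at hxb
        obtain ⟨hxU, hxb⟩ := hxb
        have hb1 : ∀ x' ∈ A, χ x y ≠ χ x' y := fun x' h => (hxb x' h).1.1 hxU
        have hb2 : ∀ x' ∈ A, χ x y ≠ x' := fun x' h => (hxb x' h).1.2 hxU
        have hb3 : ∀ x' ∈ A, x ≠ χ x' y := fun x' h => (hxb x' h).2
        refine mem_filter.2 ⟨hxU, fun h => hb1 x h rfl, (good_iff _ _).2 ⟨?_, ?_⟩⟩
        · intro a ha b hb hab
          rcases mem_insert.1 ha with rfl | ha1' <;> rcases mem_insert.1 hb with rfl | hb1'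
          · rfl
          · exact absurd hab (hb1 _ hb1')
          · exact absurd hab.symm (hb1 _ ha1')
          · exact hg1 _ ha1' _ hb1' hab
        · intro a ha b hb
          rcases mem_insert.1 ha with rfl | ha1' <;> rcases mem_insert.1 hb with rfl | hb1'
          · exact hx _ hxU _ hyY
          · exact hb2 _ hb1'
          · exact (hb3 _ ha1').symm
          · exact hg2 _ ha1' _ hb1'
      omega)
  set C := {y ∈ Y | good A y} with hCdef
  have hCpos : 2 * m ^ 2 < #C := by
    by_contra! h
    have := Nat.mul_le_mul_left (2 ^ m) h
    linarith
  obtain ⟨good', good'_iff⟩ : ∃ good' : Finset ℕ → Unit → Prop, ∀ B u, good' B u ↔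
    (∀ x ∈ A, ∀ x' ∈ A, ∀ y ∈ B, ∀ y' ∈ B, χ x y = χ x' y' → x = x' ∧ y = y') ∧
      (∀ x ∈ A, ∀ y ∈ B, ∀ y' ∈ B, χ x y ≠ y') := ⟨_, fun _ _ => Iff.rfl⟩
  have : ∀ B u, Decidable (good' B u) := fun _ _ => Classical.propDecidable _
  -- The columns of `B` are picked from `C` against a single dummy column `()`.
  obtain ⟨B, hBC, hB, hgood⟩ := greedy C ({()} : Finset Unit) good' #C m (by nlinarith)
    (by simp [good'_iff]) (by
      intro B hBC hB u _ hg
      obtain ⟨hg1, hg2⟩ := (good'_iff B u).1 hg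
      refine Nat.le_mul_of_pos_right _ (card_pos.2 ?_)
      set bad1 := (A ×ˢ A ×ˢ B).biUnion fun p => {y ∈ Y | χ p.1 y = χ p.2.1 p.2.2} with hbad1
      set bad2 := (A ×ˢ B).biUnion fun p => {y ∈ Y | χ p.1 y = p.2} with hbad2
      set bad3 := (A ×ˢ B).image fun p => χ p.1 p.2 with hbad3
      set M := 4 * m ^ 3 * 2 ^ m with hM
      have hb1 : M * #bad1 ≤ m ^ 3 * #Y := by
        calc M * #bad1 ≤ M * ∑ p ∈ A ×ˢ A ×ˢ B, #{y ∈ Y | χ p.1 y = χ p.2.1 p.2.2} :=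
              Nat.mul_le_mul_left _ card_biUnion_le
          _ ≤ ∑ p ∈ A ×ˢ A ×ˢ B, #Y := by
              rw [mul_sum]
              exact sum_le_sum fun p hp => hrow _ (hAU (mem_product.1 hp).1) _
          _ = #A * (#A * #B) * #Y := by simp [card_product]
          _ ≤ m * (m * m) * #Y := by rw [hA]; gcongr
          _ = _ := by ring
      have hb2 : M * #bad2 ≤ m ^ 2 * #Y := by
        calc M * #bad2 ≤ M * ∑ p ∈ A ×ˢ B, #{y ∈ Y | χ p.1 y = p.2} :=
              Nat.mul_le_mul_left _ card_biUnion_le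
          _ ≤ ∑ p ∈ A ×ˢ B, #Y := by
              rw [mul_sum]
              exact sum_le_sum fun p hp => hrow _ (hAU (mem_product.1 hp).1) _
          _ = (#A * #B) * #Y := by simp [card_product]
          _ ≤ (m * m) * #Y := by rw [hA]; gcongr
          _ = _ := by ring
      have hb3 : #bad3 ≤ m ^ 2 := by
        calc #bad3 ≤ #(A ×ˢ B) := card_image_le
          _ = #A * #B := card_product _ _
          _ ≤ m * m := by rw [hA]; gcongr
          _ = _ := by ring
      have hlt : #(bad1 ∪ bad2 ∪ bad3) < #C := by
        have h1 := card_union_le (bad1 ∪ bad2) bad3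
        have h2 := card_union_le bad1 bad2
        have hMpos : 0 < M := by positivity
        have hm23 : m ^ 2 ≤ m ^ 3 := Nat.pow_le_pow_right hm (by norm_num)
        have h3 : M * (#bad1 + #bad2) ≤ 2 * m ^ 3 * #Y := by nlinarith
        have h4 : 2 * m ^ 3 * #Y ≤ 2 * m ^ 3 * (2 ^ m * #C) := Nat.mul_le_mul_left _ hC
        have h5 : 2 * (M * (#bad1 + #bad2)) ≤ M * #C := by rw [hM] at *; nlinarith
        have h6 : 2 * (#bad1 + #bad2) ≤ #C := by
          refine Nat.le_of_mul_le_mul_left ?_ hMpos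
          linarith
        omega
      obtain ⟨y, hyC, hyb⟩ := exists_mem_notMem_of_card_lt_card hlt
      obtain ⟨hyY, hyC1⟩ := mem_filter.1 hyC
      have hyC1 := ((good_iff _ _).1 hyC1).1
      simp only [hbad1, hbad2, hbad3, mem_union, mem_biUnion, mem_filter, mem_image, mem_product,
        Prod.exists, not_or, not_exists, not_and, and_imp] at hyb
      obtain ⟨⟨hyb1, hyb2⟩, hyb3⟩ := hyb
      refine ⟨y, mem_filter.2 ⟨hyC, fun h => ?_, (good'_iff _ _).2 ⟨?_, ?_⟩⟩⟩
      · obtain ⟨a, ha⟩ : A.Nonempty := card_pos.1 (by omega)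
        exact hyb1 a a y ha ha h hyY rfl
      · intro a ha a' ha' b hb b' hb' h
        rcases mem_insert.1 hb with rfl | hb1' <;> rcases mem_insert.1 hb' with rfl | hb2'
        · exact ⟨hyC1 _ ha _ ha' h, rfl⟩
        · exact absurd h (hyb1 _ _ _ ha ha' hb2' hyY)
        · exact absurd h.symm (hyb1 _ _ _ ha' ha hb1' hyY)
        · exact hg1 _ ha _ ha' _ hb1' _ hb2' h
      · intro a ha b hb b' hb'
        rcases mem_insert.1 hb with rfl | hb1' <;> rcases mem_insert.1 hb' with rfl | hb2'
        · exact hy _ (hAU ha) _ hyY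
        · exact hyb2 _ _ ha hb2' hyY
        · exact hyb3 _ _ ha hb1'
        · exact hg2 _ ha _ hb1' _ hb2')
  have hne : ({u ∈ ({()} : Finset Unit) | good' B u} : Finset Unit).Nonempty := by
    rw [← card_pos]
    by_contra! h
    rw [card_singleton, Nat.le_zero.1 h] at hgood
    omega
  obtain ⟨u, hu⟩ := hne
  obtain ⟨hr1, hr3⟩ := (good'_iff _ _).1 (mem_filter.1 hu).2
  exact ⟨A, hAU, B, hBC.trans (filter_subset _ _), hA, hB, hr1,
    fun x hx x' hx' y hy => ((good_iff _ _).1 (mem_filter.1 (hBC hy)).2).2 x hx x' hx', hr3⟩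

/-! ### Canonical bicliques and grids -/

/-- In a `C_{2m}`-free system, colour each pair `(x, y)` of a large biclique of the shadow by a
vertex completing it to an edge. Some `l × l` sub-biclique has a colouring depending only on the row
or only on the column. The biclique may be very unbalanced: linearly many rows in `l`,
exponentially many columns. -/
lemma exists_canonical (m : ℕ) (hm : 2 ≤ m) : ∃ A B : ℕ, ∀ l, 1 ≤ l →
    ∀ (X Y V : Finset ℕ) (H : Finset (Finset ℕ)) (χ : ℕ → ℕ → ℕ), H ⊆ V.powersetCard 3 →
      #X = A * l → B ^ l ≤ #Y → (∀ x ∈ X, ∀ y ∈ Y, ({x, y, χ x y} : Finset ℕ) ∈ H) →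
      ¬ HasLooseCycle (2 * m) H →
      ∃ S ⊆ X, ∃ T ⊆ Y, #S = l ∧ #T = l ∧
        ((∃ f : ℕ → ℕ, ∀ x ∈ S, ∀ y ∈ T, χ x y = f x) ∨
          (∃ g : ℕ → ℕ, ∀ x ∈ S, ∀ y ∈ T, χ x y = g y)) := by
  obtain ⟨M, hM⟩ : ∃ M, M = 4 * m ^ 3 * 2 ^ m := ⟨_, rfl⟩
  have hMpos : 0 < M := by rw [hM]; positivity
  obtain ⟨A, hA⟩ : ∃ A, A = 8 * M + 24 * m := ⟨_, rfl⟩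
  refine ⟨A, 8 * M * A, ?_⟩
  intro l hl X Y V H χ hHV hX hY hχ hc
  classical
  have hApos : 0 < A := by omega
  have hbig : 4 * M * A ^ l * l ≤ #Y := by
    refine le_trans ?_ hY
    calc 4 * M * A ^ l * l ≤ (4 * M) ^ l * A ^ l * 2 ^ l := by
          gcongr
          · exact Nat.le_self_pow (by omega) _
          · exact Nat.lt_two_pow_self.le
      _ = (8 * M * A) ^ l := by rw [← mul_pow, ← mul_pow]; ring
  have hbig2 : 4 * m ^ 2 * 2 ^ m < #Y := by
    have h1 : 4 * M * A ≤ #Y := by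
      refine le_trans ?_ hbig
      have := Nat.le_self_pow (show l ≠ 0 by omega) A
      calc 4 * M * A = 4 * M * A * 1 := by ring
        _ ≤ _ := by gcongr
    have h2 : 4 * m ^ 2 * 2 ^ m ≤ M := by
      rw [hM]
      have := Nat.pow_le_pow_right (show 0 < m by omega) (show 2 ≤ 3 by norm_num)
      gcongr
    nlinarith
  have hfin : ∀ Y' : Finset ℕ, ∀ P : ℕ → Prop, ∀ [DecidablePred P],
      #Y ≤ 4 * M * A ^ l * #{y ∈ Y' | P y} →
      ∃ T ⊆ Y', #T = l ∧ ∀ y ∈ T, P y := by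
    intro Y' P _ h
    have h1 : l ≤ #{y ∈ Y' | P y} :=
      Nat.le_of_mul_le_mul_left (hbig.trans h) (by positivity)
    obtain ⟨T, hT, hTl⟩ := exists_subset_card_eq h1
    exact ⟨T, hT.trans (filter_subset _ _), hTl, fun y hy => (mem_filter.1 (hT hy)).2⟩
  have hdist := fun x hx y hy => distinct_of_mem hHV (hχ x hx y hy)
  have hXl : l ≤ #X := by rw [hX]; exact Nat.le_mul_of_pos_left _ hApos
  set Y1 := {y ∈ Y | ∃ c, 2 * l ≤ #{x ∈ X | χ x y = c}} with hY1
  set Y2 := {y ∈ Y | ¬ ∃ c, 2 * l ≤ #{x ∈ X | χ x y = c}} with hY2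
  have hsplit : #Y1 + #Y2 = #Y := card_filter_add_card_filter_not _
  rcases Nat.lt_or_ge (2 * #Y1) #Y with hcase | hcase
  swap
  · -- Most columns have a popular colour: pigeonhole gives a column-canonical biclique.
    have hg : ∀ y, ∃ c, y ∈ Y1 → 2 * l ≤ #{x ∈ X | χ x y = c} := by
      intro y
      by_cases hy : y ∈ Y1
      · obtain ⟨c, hc⟩ := (mem_filter.1 hy).2
        exact ⟨c, fun _ => hc⟩
      · exact ⟨0, fun h => absurd h hy⟩
    choose g hg using hg
    obtain ⟨S, hS, hSl, hcard⟩ := exists_biclique X Y1 (fun x y => χ x y = g y) A l hXl (by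
      intro y hy
      rw [hX]
      have := hg y hy
      gcongr
      omega)
    obtain ⟨T, hT, hTl, hTP⟩ := hfin Y1 (fun y => ∀ x ∈ S, χ x y = g y) (by
      have : 2 * (A ^ l * #{y ∈ Y1 | ∀ x ∈ S, χ x y = g y}) ≤
        4 * M * (A ^ l * #{y ∈ Y1 | ∀ x ∈ S, χ x y = g y}) := by gcongr; omega
      linarith)
    exact ⟨S, hS, T, hT.trans (filter_subset _ _), hSl, hTl, Or.inr ⟨g, fun x hx y hy => hTP y hy x hx⟩⟩
  set X1 := {x ∈ X | ∃ c, #Y2 < M * #{y ∈ Y2 | χ x y = c}} with hX1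
  set U := {x ∈ X | ¬ ∃ c, #Y2 < M * #{y ∈ Y2 | χ x y = c}} with hU
  have hsplitX : #X1 + #U = #X := card_filter_add_card_filter_not _
  rcases Nat.lt_or_ge (2 * #X1) #X with hcase' | hcase'
  swap
  · -- Most rows have a colour popular among the remaining columns.
    have hX1big : 4 * M * l ≤ #X1 := by nlinarith
    have hf : ∀ x, ∃ c, x ∈ X1 → #Y2 < M * #{y ∈ Y2 | χ x y = c} := by
      intro y
      by_cases hy : y ∈ X1
      · obtain ⟨c, hc⟩ := (mem_filter.1 hy).2
        exact ⟨c, fun _ => hc⟩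
      · exact ⟨0, fun h => absurd h hy⟩
    choose f hf using hf
    have hX1l : l ≤ #X1 := by nlinarith
    have h1 := many_large_degrees X1 Y2 (fun x y => χ x y = f x) M (2 * l) (by omega)
      (by linarith) (by
        have : ∑ y ∈ Y2, #{x ∈ X1 | χ x y = f x} = ∑ x ∈ X1, #{y ∈ Y2 | χ x y = f x} := by
          simp only [card_filter]; exact sum_comm
        rw [this, mul_sum, ← smul_eq_mul, ← sum_const]
        exact sum_le_sum fun x hx => (hf x hx).le)
    set Y3 := {y ∈ Y2 | 2 * l ≤ #{x ∈ X1 | χ x y = f x}} with hY3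
    obtain ⟨S, hS, hSl, hcard⟩ := exists_biclique X1 Y3 (fun x y => χ x y = f x) A l hX1l (by
      intro y hy
      have := (mem_filter.1 hy).2
      calc #X1 ≤ A * l := by omega
        _ ≤ _ := by gcongr; omega)
    obtain ⟨T, hT, hTl, hTP⟩ := hfin Y3 (fun y => ∀ x ∈ S, χ x y = f x) (by
      have h2 := Nat.mul_le_mul_left (2 * M) hcard
      have h3 : #Y ≤ 2 * #Y2 := by omega
      linarith)
    exact ⟨S, hS.trans (filter_subset _ _), T,
      (hT.trans (filter_subset _ _)).trans (filter_subset _ _), hSl, hTl,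
      Or.inl ⟨f, fun x hx y hy => hTP y hy x hx⟩⟩
  · -- No colour is popular in a row or in a column: a rainbow `K_{m,m}` appears.
    exfalso
    obtain ⟨P, hP, Q, hQ, hPm, hQm, hr⟩ := exists_rainbow m (2 * l) (by omega) (by omega) χ U Y2
      (fun x hx y hy => (hdist x (mem_filter.1 hx).1 y (mem_filter.1 hy).1).2.2.2.2.1.symm)
      (fun x hx y hy => (hdist x (mem_filter.1 hx).1 y (mem_filter.1 hy).1).2.2.2.2.2.symm)
      (by
        intro y hy c
        have h1 := (mem_filter.1 hy).2
        push Not at h1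
        exact (card_le_card (filter_subset_filter _ (filter_subset _ _))).trans (h1 c).le)
      (by
        intro x hx c
        have h1 := (mem_filter.1 hx).2
        push Not at h1
        rw [← hM]
        exact h1 c)
      (by
        have : 24 * m * l ≤ A * l := by gcongr; omega
        linarith [show #X ≤ 2 * #U by omega])
      (by linarith [show #Y ≤ 2 * #Y2 by omega])
    have hmem : ∀ x ∈ P, ∀ y ∈ Q, x ∈ X ∧ y ∈ Y := fun x hx y hy =>
      ⟨(mem_filter.1 (hP hx)).1, (mem_filter.1 (hQ hy)).1⟩
    refine hc (hasLooseCycle_of_rainbow m hm P Q hPm hQm ?_ χ hr H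
      (fun x hx y hy => hχ x (hmem x hx y hy).1 y (hmem x hx y hy).2))
    rw [disjoint_left]
    intro x hx hx'
    exact (hdist x (hmem x hx x hx').1 x (hmem x hx x hx').2).2.2.2.1 rfl

/-- Bicliques in dense sets of ordered pairs: density `1 / q` yields a biclique with `s` rows and at
least `#V / (2 * q * (8 * q) ^ s)` columns. -/
lemma exists_biclique_of_dense (V : Finset ℕ) (E : Finset (ℕ × ℕ)) (hE : E ⊆ V ×ˢ V) (q s : ℕ)
    (hq : 0 < q) (hdense : #V ^ 2 ≤ q * #E) (hs : 8 * q * (s + 1) ≤ #V) :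
    ∃ X ⊆ V, ∃ Y ⊆ V, #X = s ∧ #V ≤ 2 * q * (8 * q) ^ s * #Y ∧ ∀ x ∈ X, ∀ y ∈ Y, (x, y) ∈ E := by
  have h1 := many_large_degrees V V (fun x y => (x, y) ∈ E) q (#V / (2 * q)) (by nlinarith)
    (Nat.mul_div_le _ _) (by
      have : ∑ y ∈ V, #{x ∈ V | (x, y) ∈ E} = #E := by
        rw [card_eq_sum_card_fiberwise (f := Prod.snd) (t := V)
          (fun p hp => (mem_product.1 (hE hp)).2)]
        refine sum_congr rfl fun y _ => ?_
        refine card_bij (fun x _ => (x, y)) ?_ ?_ ?_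
        · intro x hx; simpa using (mem_filter.1 hx).2
        · intro a _ b _ h; simpa using h
        · rintro ⟨a, b⟩ hab
          obtain ⟨hab1, rfl⟩ := mem_filter.1 hab
          exact ⟨a, mem_filter.2 ⟨(mem_product.1 (hE hab1)).1, hab1⟩, rfl⟩
      rw [this, ← sq]; exact hdense)
  set Y0 := {y ∈ V | #V / (2 * q) ≤ #{x ∈ V | (x, y) ∈ E}} with hY0
  obtain ⟨S, hS, hSs, hcard⟩ := exists_biclique V Y0 (fun x y => (x, y) ∈ E) (8 * q) s
    (by nlinarith) (by
      intro y hy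
      have h2 := (mem_filter.1 hy).2
      have h3 : #V < 2 * q * (#V / (2 * q) + 1) := Nat.lt_mul_div_succ _ (by omega)
      have h4 : s ≤ #V / (2 * q) := by
        rw [Nat.le_div_iff_mul_le (by omega)]; nlinarith
      obtain ⟨r, hr⟩ := Nat.exists_eq_add_of_le h4
      rw [hr] at h3
      calc #V ≤ 8 * q * r := by nlinarith
        _ ≤ _ := by gcongr; omega)
  refine ⟨S, hS, {y ∈ Y0 | ∀ x ∈ S, (x, y) ∈ E}, (filter_subset _ _).trans (filter_subset _ _), hSs, ?_,
    fun x hx y hy => (mem_filter.1 hy).2 x hx⟩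
  calc #V ≤ 2 * q * #Y0 := h1
    _ ≤ 2 * q * _ := Nat.mul_le_mul_left _ hcard
    _ = _ := by ring

/-- A `C_{2m}`-free system whose shadow has density at least `2 ^ (-i)` contains a full grid of
triples `{x, f x, y}` with side `l`, for every `l` up to a constant times `log #V / i`. -/
lemma exists_star_grid (m : ℕ) (hm : 2 ≤ m) : ∃ K : ℕ, 1 ≤ K ∧ ∀ (V : Finset ℕ)
    (H : Finset (Finset ℕ)) (i l L : ℕ), 1 ≤ i → 1 ≤ l → 2 ^ L ≤ #V → K * i * l ≤ L →
    H ⊆ V.powersetCard 3 → ¬ HasLooseCycle (2 * m) H → #V ^ 2 ≤ 2 ^ i * #(shadow V H) →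
    ∃ S T : Finset ℕ, #S = l ∧ #T = l ∧ ∃ f : ℕ → ℕ, ∀ x ∈ S, ∀ y ∈ T,
      ({x, f x, y} : Finset ℕ) ∈ H := by
  obtain ⟨A, B, hAB⟩ := exists_canonical m hm
  refine ⟨4 * A + B + 4, by omega, ?_⟩
  intro V H i l L hi hl hL hK hH hc hdense
  have hil : 1 ≤ i * l := Nat.mul_pos hi hl
  have hi' : i ≤ i * l := Nat.le_mul_of_pos_right _ hl
  have hl' : l ≤ i * l := Nat.le_mul_of_pos_left _ hi
  have hAl : A * l ≤ A * (i * l) := Nat.mul_le_mul_left _ hl'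
  have hBl : B * l ≤ B * (i * l) := Nat.mul_le_mul_left _ hl'
  have hsz : 8 * 2 ^ i * (A * l + 1) ≤ #V := by
    calc 8 * 2 ^ i * (A * l + 1) ≤ 2 ^ 3 * 2 ^ i * 2 ^ (A * l) := by
          gcongr
          · norm_num
          · exact Nat.lt_two_pow_self
      _ = 2 ^ (3 + i + A * l) := by ring
      _ ≤ 2 ^ L := Nat.pow_le_pow_right (by norm_num) (by nlinarith)
      _ ≤ #V := hL
  obtain ⟨X, hX, Y, hY, hXs, hYs, hE⟩ := exists_biclique_of_dense V (shadow V H)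
    (filter_subset _ _) (2 ^ i) (A * l) (by positivity) hdense hsz
  have hχ : ∀ x y, ∃ z, (x, y) ∈ shadow V H → ({x, y, z} : Finset ℕ) ∈ H := by
    intro x y
    by_cases h : (x, y) ∈ shadow V H
    · obtain ⟨-, z, -, hz⟩ := mem_filter.1 h
      exact ⟨z, fun _ => hz⟩
    · exact ⟨0, fun h' => absurd h' h⟩
  choose χ hχ using hχ
  have hYB : B ^ l ≤ #Y := by
    have h1 : 2 * 2 ^ i * (8 * 2 ^ i) ^ (A * l) * B ^ l ≤
        2 * 2 ^ i * (8 * 2 ^ i) ^ (A * l) * #Y := by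
      refine le_trans ?_ hYs
      refine le_trans ?_ hL
      calc 2 * 2 ^ i * (8 * 2 ^ i) ^ (A * l) * B ^ l
          ≤ 2 * 2 ^ i * (2 ^ 3 * 2 ^ i) ^ (A * l) * (2 ^ B) ^ l := by
            gcongr
            · norm_num
            · exact Nat.lt_two_pow_self.le
        _ = 2 ^ (1 + i + (3 + i) * (A * l) + B * l) := by
            rw [← pow_add, ← pow_mul, ← pow_mul]; ring
        _ ≤ 2 ^ L := Nat.pow_le_pow_right (by norm_num) (by nlinarith)
    exact Nat.le_of_mul_le_mul_left h1 (by positivity)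
  have hmem : ∀ x ∈ X, ∀ y ∈ Y, ({x, y, χ x y} : Finset ℕ) ∈ H :=
    fun x hx y hy => hχ x y (hE x hx y hy)
  obtain ⟨S, hS, T, hT, hSl, hTl, ⟨f, hf⟩ | ⟨g, hg⟩⟩ := hAB l hl X Y V H χ hH hXs hYB hmem hc
  · refine ⟨S, T, hSl, hTl, f, fun x hx y hy => ?_⟩
    have := hmem x (hS hx) y (hT hy)
    rw [hf x hx y hy] at this
    rwa [show ({x, f x, y} : Finset ℕ) = {x, y, f x} by ext; simp; tauto]
  · refine ⟨T, S, hTl, hSl, g, fun y hy x hx => ?_⟩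
    have := hmem x (hS hx) y (hT hy)
    rw [hg x hx y hy] at this
    rwa [show ({y, g y, x} : Finset ℕ) = {x, y, g y} by ext; simp; tauto]

/-! ### Counting by peeling -/

open scoped Classical in
/-- The `C_k`-free triple systems on `{1, …, n}` with at most `a` edges. -/
noncomputable def fam (k n a : ℕ) : Finset (Finset (Finset ℕ)) :=
  {H ∈ ((Icc 1 n).powersetCard 3).powerset | ¬ HasLooseCycle k H ∧ #H ≤ a}

lemma mem_fam {k n a : ℕ} {H : Finset (Finset ℕ)} : H ∈ fam k n a ↔
    H ⊆ (Icc 1 n).powersetCard 3 ∧ ¬ HasLooseCycle k H ∧ #H ≤ a := by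
  simp [fam]

lemma fam_mono {k n a b : ℕ} (h : a ≤ b) : fam k n a ⊆ fam k n b := fun H hH => by
  rw [mem_fam] at hH ⊢
  exact ⟨hH.1, hH.2.1, hH.2.2.trans h⟩

/-- Peeling: if every `C_k`-free system with more than `a` edges contains a member of `P` with at
least `r` edges, then a system with at most `a + j * r` edges is determined by at most `j` members
of `P` and a remainder with at most `a` edges. -/
lemma card_fam_peel (k n a r : ℕ) (P : Finset (Finset (Finset ℕ)))
    (h : ∀ H ⊆ (Icc 1 n).powersetCard 3, ¬ HasLooseCycle k H → a < #H →
      ∃ p ∈ P, p ⊆ H ∧ r ≤ #p) (j : ℕ) :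
    #(fam k n (a + j * r)) ≤ (#P + 1) ^ j * #(fam k n a) := by
  induction j with
  | zero => simp
  | succ j ih =>
    have hsub : fam k n (a + (j + 1) * r) ⊆ fam k n (a + j * r) ∪
        (P ×ˢ fam k n (a + j * r)).image fun q => q.1 ∪ q.2 := by
      intro H hH
      obtain ⟨h1, h2, h3⟩ := mem_fam.1 hH
      rw [mem_union]
      rcases Nat.lt_or_ge a #H with hlt | hle
      · right
        obtain ⟨p, hp, hpH, hr⟩ := h H h1 h2 hlt
        refine mem_image.2 ⟨(p, H \ p), mem_product.2 ⟨hp, mem_fam.2 ⟨sdiff_subset.trans h1,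
          fun hc => h2 (hasLooseCycle_mono sdiff_subset hc), ?_⟩⟩, union_sdiff_of_subset hpH⟩
        rw [card_sdiff_of_subset hpH]
        have : (j + 1) * r = j * r + r := by ring
        omega
      · left
        exact mem_fam.2 ⟨h1, h2, hle.trans (Nat.le_add_right _ _)⟩
    calc #(fam k n (a + (j + 1) * r)) ≤ _ := card_le_card hsub
      _ ≤ _ := card_union_le _ _
      _ ≤ #(fam k n (a + j * r)) + #P * #(fam k n (a + j * r)) := by
        gcongr
        exact card_image_le.trans (card_product _ _).le
      _ = (#P + 1) * #(fam k n (a + j * r)) := by ring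
      _ ≤ (#P + 1) * ((#P + 1) ^ j * #(fam k n a)) := Nat.mul_le_mul_left _ ih
      _ = _ := by ring

/-- Listing the edges one at a time; this is peeling by single edges. -/
lemma card_fam_le_pow (k n a : ℕ) : #(fam k n a) ≤ (n ^ 3 + 1) ^ a := by
  have h1 := card_fam_peel k n 0 1 (((Icc 1 n).powersetCard 3).image fun e => {e}) (by
    intro H hH _ hpos
    obtain ⟨e, he⟩ := card_pos.1 hpos
    exact ⟨{e}, mem_image.2 ⟨e, hH he, rfl⟩, by simpa using he, by simp⟩) a
  have h2 : #(fam k n 0) ≤ 1 := by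
    rw [card_le_one]
    intro H hH H' hH'
    have e1 := (mem_fam.1 hH).2.2
    have e2 := (mem_fam.1 hH').2.2
    rw [Nat.le_zero, card_eq_zero] at e1 e2
    rw [e1, e2]
  have h3 : #(((Icc 1 n).powersetCard 3).image fun e => ({e} : Finset (Finset ℕ))) ≤ n ^ 3 := by
    refine card_image_le.trans ?_
    rw [card_powersetCard, Nat.card_Icc, Nat.add_sub_cancel]
    exact Nat.choose_le_pow _ _
  rw [zero_add, mul_one] at h1
  calc #(fam k n a) ≤ _ := h1
    _ ≤ (n ^ 3 + 1) ^ a * 1 := by gcongr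
    _ = _ := mul_one _

/-- All grids `{ {u i, w i, z j} : i, j < l }` with `u, w, z` taking values in `{1, …, n}`. -/
def grids (n l : ℕ) : Finset (Finset (Finset ℕ)) :=
  let F := Fintype.piFinset fun _ : Fin l => Icc 1 n
  (F ×ˢ F ×ˢ F).image fun t =>
    (univ : Finset (Fin l × Fin l)).image fun p => {t.1 p.1, t.2.1 p.1, t.2.2 p.2}

lemma card_grids (n l : ℕ) : #(grids n l) ≤ n ^ (3 * l) := by
  refine card_image_le.trans ?_
  simp only [card_product, Fintype.card_piFinset, Nat.card_Icc, prod_const, card_univ,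
    Fintype.card_fin, Nat.add_sub_cancel]
  apply le_of_eq; ring

/-- The grid of triples `{x, f x, y}` belongs to `grids n l` and has at least `l ^ 2 / 9` distinct
edges: a given triple `e` arises only from pairs `(x, y)` in `e × e`. -/
lemma exists_grid (n l : ℕ) (hl : 1 ≤ l) (H : Finset (Finset ℕ))
    (hH : H ⊆ (Icc 1 n).powersetCard 3) (S T : Finset ℕ) (hS : #S = l) (hT : #T = l) (f : ℕ → ℕ)
    (hf : ∀ x ∈ S, ∀ y ∈ T, ({x, f x, y} : Finset ℕ) ∈ H) :
    ∃ p ∈ grids n l, p ⊆ H ∧ l ^ 2 ≤ 9 * #p := by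
  set u := S.orderEmbOfFin hS with hu
  set z := T.orderEmbOfFin hT with hz
  have hmem : ∀ i j, ({u i, f (u i), z j} : Finset ℕ) ∈ H := fun i j =>
    hf _ (orderEmbOfFin_mem _ _ _) _ (orderEmbOfFin_mem _ _ _)
  have hV := fun i j => distinct_of_mem hH (hmem i j)
  let o : Fin l := ⟨0, hl⟩
  refine ⟨(univ : Finset (Fin l × Fin l)).image fun p => {u p.1, f (u p.1), z p.2},
    mem_image.2 ⟨(fun i => u i, fun i => f (u i), fun j => z j), ?_, rfl⟩, ?_, ?_⟩
  · simp only [mem_product, Fintype.mem_piFinset]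
    exact ⟨fun i => (hV i o).1, fun i => (hV i o).2.1, fun j => (hV o j).2.2.1⟩
  · intro e he
    obtain ⟨p, -, rfl⟩ := mem_image.1 he
    exact hmem _ _
  · have := card_le_mul_card_image (s := (univ : Finset (Fin l × Fin l)))
      (f := fun p => ({u p.1, f (u p.1), z p.2} : Finset ℕ)) 9 (by
        intro e he
        obtain ⟨p, -, rfl⟩ := mem_image.1 he
        set e : Finset ℕ := {u p.1, f (u p.1), z p.2} with he'
        have he3 : #e ≤ 3 := card_le_three
        calc _ ≤ #(e ×ˢ e) := by
              refine card_le_card_of_injOn (fun q => (u q.1, z q.2)) ?_ ?_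
              · intro q hq
                have hq : ({u q.1, f (u q.1), z q.2} : Finset ℕ) = e :=
                  (mem_filter.1 (mem_coe.1 hq)).2
                rw [mem_coe, mem_product, ← hq]
                simp
              · intro q _ q' _ h
                simp only [Prod.mk.injEq, EmbeddingLike.apply_eq_iff_eq] at h
                exact Prod.ext h.1 h.2
          _ ≤ 3 * 3 := by rw [card_product]; gcongr
          _ = 9 := by norm_num)
    simpa [sq] using this

/-- One level of the peeling: reducing from at most `b` edges to at most `4 * m * n ^ 2 / 2 ^ i` edges
by removing grids of side `l`, each described by `3 * l` vertices. Here `L` is the integer part of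
`log₂ n`, and `(l ^ 2 + 8) / 9` is the number `l ^ 2 / 9` of edges of a grid, rounded up. -/
lemma card_fam_level (m : ℕ) (hm : 2 ≤ m) : ∃ K : ℕ, 1 ≤ K ∧ ∀ n L i l : ℕ, 1 ≤ i → 1 ≤ l →
    2 ^ L ≤ n → n < 2 ^ (L + 1) → K * i * l ≤ L → ∀ b : ℕ,
    #(fam (2 * m) n b) ≤ 2 ^ (7 * L * l * (b / ((l ^ 2 + 8) / 9) + 1)) *
      #(fam (2 * m) n (4 * m * n ^ 2 / 2 ^ i)) := by
  obtain ⟨K, hK1, hK⟩ := exists_star_grid m hm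
  refine ⟨K, hK1, ?_⟩
  intro n L i l hi hl hL hL' hKl b
  have hL1 : 1 ≤ L := le_trans (Nat.mul_pos (Nat.mul_pos hK1 hi) hl) hKl
  set r := (l ^ 2 + 8) / 9 with hr
  set a := 4 * m * n ^ 2 / 2 ^ i with ha
  have hrpos : 0 < r := by
    have : 1 ≤ l ^ 2 := Nat.one_le_pow _ _ hl
    omega
  have hpeel := card_fam_peel (2 * m) n a r (grids n l) (by
    intro H hH hc hlt
    have hcard : #(Icc 1 n) = n := by simp
    have h1 := card_le_shadow (2 * m) (by omega) (Icc 1 n) H hH hc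
    have h2 : 4 * m * n ^ 2 < #H * 2 ^ i := (Nat.div_lt_iff_lt_mul (by positivity)).1 hlt
    have h3 : n ^ 2 ≤ 2 ^ i * #(shadow (Icc 1 n) H) := by
      have h4 := Nat.mul_le_mul_right (2 ^ i) h1
      refine Nat.le_of_mul_le_mul_left (c := 4 * m) ?_ (by omega)
      linarith
    obtain ⟨S, T, hS, hT, f, hf⟩ := hK (Icc 1 n) H i l L hi hl (by rwa [hcard]) hKl hH hc
      (by rwa [hcard])
    obtain ⟨p, hp, hpH, hpl⟩ := exists_grid n l hl H hH S T hS hT f hf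
    exact ⟨p, hp, hpH, by omega⟩) (b / r + 1)
  have hP : #(grids n l) + 1 ≤ 2 ^ (7 * L * l) := by
    calc #(grids n l) + 1 ≤ (2 ^ (L + 1)) ^ (3 * l) + (2 ^ (L + 1)) ^ (3 * l) := by
          refine add_le_add ((card_grids n l).trans ?_) (Nat.one_le_pow _ _ (by positivity))
          gcongr
      _ = 2 ^ ((L + 1) * (3 * l) + 1) := by rw [← pow_mul]; ring
      _ ≤ _ := Nat.pow_le_pow_right (by norm_num) (by nlinarith)
  calc #(fam (2 * m) n b) ≤ #(fam (2 * m) n (a + (b / r + 1) * r)) := by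
        refine card_le_card (fam_mono ?_)
        have := Nat.lt_mul_div_succ b hrpos
        nlinarith
    _ ≤ _ := hpeel
    _ ≤ (2 ^ (7 * L * l)) ^ (b / r + 1) * #(fam (2 * m) n a) := by gcongr
    _ = _ := by rw [← pow_mul]

lemma cube_le_four_pow (L : ℕ) : L ^ 3 ≤ 4 ^ L := by
  rcases Nat.lt_or_ge L 2 with h | h
  · interval_cases L <;> norm_num
  induction L, h using Nat.le_induction with
  | base => norm_num
  | succ L hL ih =>
    rw [pow_succ 4 L]
    nlinarith [Nat.mul_le_mul hL hL, Nat.mul_le_mul (Nat.mul_le_mul hL hL) hL]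

lemma mul_log_le (K L : ℕ) (hL : 2 ^ (K + 4) ≤ L) : K * Nat.log 2 L ≤ L := by
  have hsq : ∀ t : ℕ, 4 ≤ t → t ^ 2 ≤ 2 ^ t := by
    intro t ht
    induction t, ht using Nat.le_induction with
    | base => norm_num
    | succ t ht ih => rw [pow_succ 2 t]; nlinarith
  have hL0 : L ≠ 0 := by have : 0 < 2 ^ (K + 4) := by positivity
                         omega
  have ht : K + 4 ≤ Nat.log 2 L := Nat.le_log_of_pow_le (by norm_num) hL
  calc K * Nat.log 2 L ≤ Nat.log 2 L ^ 2 := by rw [sq]; gcongr; omega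
    _ ≤ 2 ^ Nat.log 2 L := hsq _ (by omega)
    _ ≤ L := Nat.pow_log_le_self 2 hL0

/-! ### The upper bound -/

/-- With the largest admissible `l` and with `b` the edge bound of level `i - 1`, the exponent in
`card_fam_level` is `O(n ^ 2 * i / 2 ^ i)`. -/
lemma level_exponent (m K L n i l : ℕ) (hK : 1 ≤ K) (hi : 1 ≤ i) (hl : l = L / (K * i))
    (hKi : K * i ≤ L) (hiL : 2 ^ i ≤ L) (hn : 2 ^ L ≤ n) :
    ((7 * L * l * (4 * m * n ^ 2 / 2 ^ (i - 1) / ((l ^ 2 + 8) / 9) + 1) : ℕ) : ℝ) ≤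
      (1008 * K * m + 7) * n ^ 2 * (i / 2 ^ i) := by
  have hKi0 : 0 < K * i := Nat.mul_pos hK hi
  have hl1 : 1 ≤ l := by rw [hl, Nat.one_le_div_iff hKi0]; exact hKi
  have hlL : l ≤ L := by rw [hl]; exact Nat.div_le_self _ _
  have hL2 : L ≤ 2 * K * i * l := by
    have : L < K * i * (L / (K * i) + 1) := Nat.lt_mul_div_succ _ hKi0
    rw [← hl] at this
    nlinarith
  set r := (l ^ 2 + 8) / 9 with hr
  have hr9 : l ^ 2 ≤ 9 * r := by omega
  have hr0 : 0 < r := by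
    have : 1 ≤ l ^ 2 := Nat.one_le_pow _ _ hl1
    omega
  set b := 4 * m * n ^ 2 / 2 ^ (i - 1) with hb
  have hL3 : L ^ 3 ≤ n ^ 2 := by
    calc L ^ 3 ≤ 4 ^ L := cube_le_four_pow L
      _ = (2 ^ L) ^ 2 := by rw [← pow_mul, mul_comm, pow_mul]; norm_num
      _ ≤ n ^ 2 := by gcongr
  have hbR : (b : ℝ) * 2 ^ i ≤ 8 * m * n ^ 2 := by
    have h1 : b * 2 ^ (i - 1) ≤ 4 * m * n ^ 2 := Nat.div_mul_le_self _ _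
    have h2 : (2 : ℕ) ^ i = 2 ^ (i - 1) * 2 := by rw [← pow_succ]; congr 1; omega
    have h3 : b * 2 ^ i ≤ 8 * m * n ^ 2 := by rw [h2]; nlinarith
    exact_mod_cast h3
  have hdiv : ((b / r : ℕ) : ℝ) * l ^ 2 ≤ 9 * b := by
    have h1 : b / r * r ≤ b := Nat.div_mul_le_self _ _
    have h2 : b / r * l ^ 2 ≤ 9 * b := by nlinarith
    exact_mod_cast h2
  have hlR : (1 : ℝ) ≤ l := by exact_mod_cast hl1
  have hLR : (L : ℝ) ≤ 2 * K * i * l := by exact_mod_cast hL2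
  have hiR : (1 : ℝ) ≤ i := by exact_mod_cast hi
  have h2i : (0 : ℝ) < 2 ^ i := by positivity
  -- the part of the exponent coming from the number of grids removed
  have e1 : (L : ℝ) * l * (b / r : ℕ) ≤ 18 * K * i * b := by
    have hb0 : (0 : ℝ) ≤ (b / r : ℕ) := Nat.cast_nonneg _
    calc (L : ℝ) * l * (b / r : ℕ) ≤ (2 * K * i * l) * l * (b / r : ℕ) := by gcongr
      _ = 2 * K * i * ((b / r : ℕ) * l ^ 2) := by ring
      _ ≤ 2 * K * i * (9 * b) := by gcongr
      _ = _ := by ring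
  -- the rounding error, one extra grid per level
  have e2 : (L : ℝ) * l * 2 ^ i ≤ n ^ 2 := by
    have : L * l * 2 ^ i ≤ n ^ 2 := by
      calc L * l * 2 ^ i ≤ L * L * L := by gcongr
        _ = L ^ 3 := by ring
        _ ≤ _ := hL3
    exact_mod_cast this
  push_cast
  rw [← mul_div_assoc, le_div_iff₀ h2i]
  have e3 : (18 * K * i * b : ℝ) * 2 ^ i ≤ 18 * K * i * (8 * m * n ^ 2) := by
    rw [mul_assoc _ (b : ℝ)]; gcongr
  have e4 : (n : ℝ) ^ 2 ≤ n ^ 2 * i := le_mul_of_one_le_right (by positivity) hiR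
  have e5 := mul_le_mul_of_nonneg_right e1 h2i.le
  nlinarith

/-- The levels `i = 1, 2, …, log₂ L` are peeled in turn. The total cost up to level `i` is
`C₁ * n ^ 2` times `2 - (i + 2) / 2 ^ i = ∑ j ≤ i, j / 2 ^ j`, which stays bounded. The `O(n ^ 2 / L)`
edges left after the last level are listed one by one. -/
lemma card_fam_upper (m : ℕ) (hm : 2 ≤ m) : ∃ (C : ℝ) (N : ℕ), 0 < C ∧ ∀ n, N ≤ n →
    (#(fam (2 * m) n (4 * m * n ^ 2)) : ℝ) ≤ 2 ^ (C * (n : ℝ) ^ 2) := by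
  obtain ⟨K, hK1, hK⟩ := card_fam_level m hm
  set C₁ : ℝ := 1008 * K * m + 7 with hC₁
  refine ⟨2 * C₁ + 56 * m, 2 ^ 2 ^ (K + 4), by positivity, ?_⟩
  intro n hn
  have hn0 : n ≠ 0 := by
    have : 0 < 2 ^ 2 ^ (K + 4) := by positivity
    omega
  obtain ⟨L, hLdef⟩ : ∃ L, L = Nat.log 2 n := ⟨_, rfl⟩
  have hL : 2 ^ (K + 4) ≤ L := by
    rw [hLdef]; exact Nat.le_log_of_pow_le (by norm_num) hn
  have hLn : 2 ^ L ≤ n := by rw [hLdef]; exact Nat.pow_log_le_self 2 hn0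
  have hnL : n < 2 ^ (L + 1) := by rw [hLdef]; exact Nat.lt_pow_succ_log_self (by norm_num) n
  have hL1 : 1 ≤ L := le_trans (Nat.one_le_pow _ _ (by norm_num)) hL
  have hKL := mul_log_le K L hL
  have hstep : ∀ i ≤ Nat.log 2 L, (#(fam (2 * m) n (4 * m * n ^ 2)) : ℝ) ≤
      2 ^ (C₁ * n ^ 2 * (2 - (i + 2) / 2 ^ i)) * #(fam (2 * m) n (4 * m * n ^ 2 / 2 ^ i)) := by
    intro i
    induction i with
    | zero => intro _; simp
    | succ i ih =>
      intro hi
      have h1 := ih (by omega)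
      have hKi : K * (i + 1) ≤ L := le_trans (by gcongr) hKL
      have hKi0 : 0 < K * (i + 1) := by positivity
      have h2i : 2 ^ (i + 1) ≤ L :=
        (Nat.pow_le_pow_right (by norm_num) hi).trans (Nat.pow_log_le_self 2 (by omega))
      set l := L / (K * (i + 1)) with hl
      have hl1 : 1 ≤ l := by rw [hl, Nat.one_le_div_iff hKi0]; exact hKi
      have h2 := hK n L (i + 1) l (by omega) hl1 hLn hnL (Nat.mul_div_le _ _)
        (4 * m * n ^ 2 / 2 ^ i)
      have h3 := level_exponent m K L n (i + 1) l hK1 (by omega) hl hKi h2i hLn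
      rw [Nat.add_sub_cancel] at h3
      have h4 : (#(fam (2 * m) n (4 * m * n ^ 2 / 2 ^ i)) : ℝ) ≤
          2 ^ (C₁ * n ^ 2 * ((i + 1 : ℕ) / 2 ^ (i + 1))) *
            #(fam (2 * m) n (4 * m * n ^ 2 / 2 ^ (i + 1))) := by
        refine le_trans (Nat.cast_le.2 h2) ?_
        rw [Nat.cast_mul, Nat.cast_pow, ← Real.rpow_natCast, Nat.cast_ofNat]
        gcongr
        norm_num
      refine h1.trans ?_
      calc _ ≤ (2 : ℝ) ^ (C₁ * n ^ 2 * (2 - (i + 2) / 2 ^ i)) *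
            (2 ^ (C₁ * n ^ 2 * ((i + 1 : ℕ) / 2 ^ (i + 1))) *
            #(fam (2 * m) n (4 * m * n ^ 2 / 2 ^ (i + 1)))) := by gcongr
        _ = _ := by
          rw [← mul_assoc, ← Real.rpow_add (by norm_num)]
          congr 2
          push_cast
          field_simp
          ring
  set I := Nat.log 2 L with hI
  have hfin := hstep I le_rfl
  set a := 4 * m * n ^ 2 / 2 ^ I with ha
  have hlast : (#(fam (2 * m) n a) : ℝ) ≤ 2 ^ (56 * m * (n : ℝ) ^ 2) := by
    have h1 : #(fam (2 * m) n a) ≤ 2 ^ (7 * L * a) := by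
      calc #(fam (2 * m) n a) ≤ (n ^ 3 + 1) ^ a := card_fam_le_pow _ _ _
        _ ≤ (2 ^ (7 * L)) ^ a := by
          gcongr
          calc n ^ 3 + 1 ≤ (2 ^ (L + 1)) ^ 3 + (2 ^ (L + 1)) ^ 3 := by
                refine add_le_add (by gcongr) (Nat.one_le_pow _ _ (by positivity))
            _ = 2 ^ ((L + 1) * 3 + 1) := by rw [← pow_mul]; ring
            _ ≤ _ := Nat.pow_le_pow_right (by norm_num) (by omega)
        _ = _ := by rw [← pow_mul]
    have h2 : 7 * L * a ≤ 56 * m * n ^ 2 := by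
      have h3 : L < 2 ^ (I + 1) := Nat.lt_pow_succ_log_self (by norm_num) L
      have h4 : a * 2 ^ I ≤ 4 * m * n ^ 2 := Nat.div_mul_le_self _ _
      rw [pow_succ] at h3
      have h5 : L * a ≤ 2 ^ I * 2 * a := by gcongr
      nlinarith
    have h3 : #(fam (2 * m) n a) ≤ 2 ^ (56 * m * n ^ 2) :=
      h1.trans (Nat.pow_le_pow_right (by norm_num) h2)
    have h4 : ((2 : ℝ) ^ (56 * m * (n : ℝ) ^ 2)) = ((2 ^ (56 * m * n ^ 2) : ℕ) : ℝ) := by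
      rw [show 56 * m * (n : ℝ) ^ 2 = ((56 * m * n ^ 2 : ℕ) : ℝ) by push_cast; ring,
        Real.rpow_natCast, Nat.cast_pow, Nat.cast_ofNat]
    rw [h4]
    exact_mod_cast h3
  refine hfin.trans ?_
  calc _ ≤ (2 : ℝ) ^ (C₁ * n ^ 2 * 2) * 2 ^ (56 * m * (n : ℝ) ^ 2) := by
        gcongr
        · norm_num
        · have : (0 : ℝ) ≤ (I + 2) / 2 ^ I := by positivity
          linarith
    _ = _ := by
      rw [← Real.rpow_add (by norm_num)]; congr 1; ring

/-! ### The lower bound -/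

/-- Nonconsecutive edges of a loose cycle of length at least 4 are disjoint, so they cannot share the
vertex `1`. -/
lemma not_hasLooseCycle_star (k : ℕ) (hk : 4 ≤ k) (H : Finset (Finset ℕ))
    (hH : ∀ e ∈ H, 1 ∈ e) : ¬ HasLooseCycle k H := by
  rintro ⟨e, v, -, -, he, -, hdisj⟩
  have hne : ∀ a : ℕ, 1 ≤ a → a < 4 → (a : ZMod k) ≠ 0 := by
    intro a h1 h2 h
    have := Nat.le_of_dvd (by omega) ((ZMod.natCast_eq_zero_iff a k).1 h)
    omega
  have h0 := hdisj 0 2 (by exact_mod_cast hne 2 (by norm_num) (by norm_num))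
    (fun h => hne 1 (by norm_num) (by norm_num) (by
      push_cast; linear_combination h))
    (fun h => hne 3 (by norm_num) (by norm_num) (by
      push_cast; linear_combination -h))
  have : 1 ∈ e 0 ∩ e 2 := mem_inter.2 ⟨hH _ (he 0), hH _ (he 2)⟩
  rw [h0] at this
  simp at this

/-- The subsets of the star of all triples through the vertex `1` are `C_k`-free. -/
lemma card_fam_lower (k : ℕ) (hk : 4 ≤ k) (n : ℕ) (hn : 4 ≤ n) (F : Finset (Finset (Finset ℕ)))
    (hF : ∀ H ⊆ (Icc 1 n).powersetCard 3, ¬ HasLooseCycle k H → H ∈ F) :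
    (2 : ℝ) ^ ((1 / 8 : ℝ) * (n : ℝ) ^ 2) ≤ #F := by
  -- the star of all triples in `{1, …, n}` containing `1`
  set star := ((Icc 2 n).powersetCard 2).image (insert 1) with hstar
  have hnot : ∀ p ∈ (Icc 2 n).powersetCard 2, 1 ∉ p := by
    intro p hp h1
    have := (mem_powersetCard.1 hp).1 h1
    simp at this
  have hcard : #star = (n - 1).choose 2 := by
    rw [hstar, card_image_of_injOn, card_powersetCard, Nat.card_Icc]
    · rfl
    · intro p hp q hq h
      rw [← erase_insert (hnot p hp), ← erase_insert (hnot q hq)]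
      exact congrArg (fun e => e.erase 1) h
  have hsub : star.powerset ⊆ F := by
    intro H hH
    rw [mem_powerset] at hH
    refine hF H (fun e he => ?_) (not_hasLooseCycle_star k hk H fun e he => ?_)
    · obtain ⟨p, hp, rfl⟩ := mem_image.1 (hH he)
      obtain ⟨hp1, hp2⟩ := mem_powersetCard.1 hp
      refine mem_powersetCard.2 ⟨insert_subset (by simp; omega)
        (hp1.trans (Icc_subset_Icc_left (by norm_num))), ?_⟩
      rw [card_insert_of_notMem (hnot p hp), hp2]
    · obtain ⟨p, hp, rfl⟩ := mem_image.1 (hH he)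
      simp
  have h1 := card_le_card hsub
  rw [card_powerset, hcard] at h1
  have h2 : ((1 / 8 : ℝ) * (n : ℝ) ^ 2) ≤ ((n - 1).choose 2 : ℕ) := by
    rw [Nat.cast_choose_two, Nat.cast_sub (by omega)]
    have : (4 : ℝ) ≤ n := by exact_mod_cast hn
    push_cast
    nlinarith
  calc (2 : ℝ) ^ ((1 / 8 : ℝ) * (n : ℝ) ^ 2) ≤ 2 ^ (((n - 1).choose 2 : ℕ) : ℝ) :=
        Real.rpow_le_rpow_of_exponent_le (by norm_num) h2
    _ = ((2 ^ (n - 1).choose 2 : ℕ) : ℝ) := by rw [Real.rpow_natCast]; push_cast; rfl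
    _ ≤ #F := by exact_mod_cast h1

end LooseCycle

/-- For every even `k ≥ 4` there are constants `c₂ ≥ c₁ > 0` such that for all large `n`,
the number of `C_k`-free 3-uniform hypergraphs on `[n]` is between `2^(c₁·n²)` and
`2^(c₂·n²)`. -/
theorem number_of_Ck_free_triple_systems_two_sided (k : ℕ) (hk : 4 ≤ k) (hke : Even k) :
    ∃ c₁ c₂ : ℝ, 0 < c₁ ∧ c₁ ≤ c₂ ∧ ∃ N : ℕ, ∀ n : ℕ, N ≤ n →
      (2 : ℝ) ^ (c₁ * (n : ℝ) ^ 2) ≤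
        (({H : Finset (Finset ℕ) |
            H ⊆ (Finset.Icc 1 n).powersetCard 3 ∧ ¬ HasLooseCycle k H} : Set _).ncard : ℝ) ∧
      (({H : Finset (Finset ℕ) |
          H ⊆ (Finset.Icc 1 n).powersetCard 3 ∧ ¬ HasLooseCycle k H} : Set _).ncard : ℝ)
        ≤ (2 : ℝ) ^ (c₂ * (n : ℝ) ^ 2) := by
  obtain ⟨m, rfl⟩ : ∃ m, k = 2 * m := by
    obtain ⟨m, rfl⟩ := hke
    exact ⟨m, by ring⟩
  obtain ⟨C, N, hC, hup⟩ := LooseCycle.card_fam_upper m (by omega)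
  refine ⟨1 / 8, max C (1 / 8), by norm_num, le_max_right _ _, max N 4, ?_⟩
  intro n hn
  -- a triple system without a loose cycle has at most `4 * m * n ^ 2` edges
  have hset : ({H : Finset (Finset ℕ) | H ⊆ (Finset.Icc 1 n).powersetCard 3 ∧
      ¬ HasLooseCycle (2 * m) H} : Set _) = ↑(LooseCycle.fam (2 * m) n (4 * m * n ^ 2)) := by
    ext H
    rw [Finset.mem_coe, LooseCycle.mem_fam, Set.mem_ofPred_eq]
    refine ⟨fun h => ⟨h.1, h.2, ?_⟩, fun h => ⟨h.1, h.2.1⟩⟩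
    have h1 := LooseCycle.card_le_shadow (2 * m) hk _ H h.1 h.2
    have h2 : (LooseCycle.shadow (Finset.Icc 1 n) H).card ≤ n ^ 2 := by
      refine (Finset.card_filter_le _ _).trans ?_
      rw [Finset.card_product, Nat.card_Icc, Nat.add_sub_cancel, sq]
    nlinarith
  rw [hset, Set.ncard_coe_finset]
  refine ⟨LooseCycle.card_fam_lower (2 * m) hk n (le_trans (le_max_right _ _) hn) _ ?_, ?_⟩
  · intro H hH hc
    rw [← Finset.mem_coe, ← hset]
    exact ⟨hH, hc⟩
  · refine (hup n (le_trans (le_max_left _ _) hn)).trans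
      (Real.rpow_le_rpow_of_exponent_le (by norm_num) ?_)
    gcongr
    exact le_max_left _ _
end
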